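/- arXiv:1612.07148 — 11 statements merged into one kernel-verified Lean document; each statement's English description precedes it below -/
import Mathlib

section
/- Let R be a commutative ring and, for i = 1, 2, 3, 4, let σᵢ⁺, σᵢ⁻, τᵢ⁺, τᵢ⁻ be elements of R. Define zᵢ = σᵢ⁺ + σᵢ⁻, wᵢ = τᵢ⁺ + τᵢ⁻, uᵢ = σᵢ⁺ + τᵢ⁻, vᵢ = σᵢ⁻ + τᵢ⁺. Then z₁z₂z₃z₄ + w₁w₂w₃w₄ − u₁v₂z₃z₄ + u₁w₂v₃z₄ − u₁w₂w₃v₄ − z₁u₂v₃z₄ + z₁u₂w₃v₄ − v₁u₂w₃w₄ − z₁z₂u₃v₄ + v₁z₂u₃w₄ − w₁v₂u₃w₄ − v₁z₂z₃u₄ + w₁v₂z₃u₄ − w₁w₂v₃u₄ + v₁u₂v₃u₄ + u₁v₂u₃v₄ = ∏ᵢ₌₁⁴(σᵢ⁺ − τᵢ⁺) + ∏ᵢ₌₁⁴(σᵢ⁻ − τᵢ⁻). -/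
/-!
The sixteen monomials are the closed walks of length four on two states, where `z` and `w` stay at
the first and the second state and `u`, `v` pass between them. With signs, their sum is the trace of
a product of four transfer matrices `!![z, u; -v, -w]`. In polar variables such a matrix has the
column vector `(1, -1)` as an eigenvector with eigenvalue `σ⁻ - τ⁻` and the row vector `(1, 1)` as a
left eigenvector with eigenvalue `σ⁺ - τ⁺`. One change of basis therefore makes all the matrices
upper triangular, and the trace of the product is read off from their diagonals.
-/

open Matrix

section UpperTriangular

variable {m R : Type*} [Fintype m] [LinearOrder m]

theorem diag_mul_of_isUpperTriangular [NonUnitalNonAssocSemiring R] {A B : Matrix m m R}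
    (hA : A.IsUpperTriangular) (hB : B.IsUpperTriangular) :
    (A * B).diag = A.diag * B.diag := by
  ext i
  rw [diag_apply, mul_apply, Pi.mul_apply, diag_apply, diag_apply]
  refine Finset.sum_eq_single i (fun k _ hki ↦ ?_) (by simp)
  rcases hki.lt_or_gt with hk | hk
  · rw [hA hk, zero_mul]
  · rw [hB hk, mul_zero]

theorem diag_list_prod_of_isUpperTriangular [Semiring R] {l : List (Matrix m m R)}
    (hl : ∀ A ∈ l, A.IsUpperTriangular) :
    l.prod.diag = (l.map diag).prod := by
  induction l with
  | nil => simp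
  | cons A l ih =>
    obtain ⟨hA, hl⟩ := List.forall_mem_cons.mp hl
    have hprod : l.prod.IsUpperTriangular :=
      list_prod_mem (S := blockTriangularSubsemiring R id) hl
    rw [List.prod_cons, diag_mul_of_isUpperTriangular hA hprod, ih hl, List.map_cons,
      List.prod_cons]

end UpperTriangular

theorem isUpperTriangular_fin_two {R : Type*} [Zero R] (a b d : R) :
    !![a, b; 0, d].IsUpperTriangular := by
  intro i j hij
  fin_cases i <;> fin_cases j <;> simp_all

theorem trace_list_prod_map_conj {m R : Type*} [Fintype m] [DecidableEq m] [CommRing R]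
    (g : ConjAct (Matrix m m R)ˣ) (l : List (Matrix m m R)) :
    (l.map (g • ·)).prod.trace = l.prod.trace := by
  rw [← List.smul_prod', ConjAct.units_smul_def, trace_units_conj]

section TransferMatrix

variable {R : Type*} [Ring R]

/-- The transfer matrix of one index of the cutting equation. Its two states record whether the
walk is at `z` or at `w`; the signs of the second row produce the signs of the monomials. -/
def transferMatrix (z w u v : R) : Matrix (Fin 2) (Fin 2) R :=
  !![z, u; -v, -w]

variable (R) in
/-- The change of basis that triangularizes every transfer matrix in polar variables: the second
row is the common left eigenvector `(1, 1)`, the first column of the inverse is the common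
eigenvector `(1, -1)`. -/
def polarBasis : (Matrix (Fin 2) (Fin 2) R)ˣ where
  val := !![1, 0; 1, 1]
  inv := !![1, 0; -1, 1]
  val_inv := by simp [one_fin_two]
  inv_val := by simp [one_fin_two]

theorem polarBasis_smul_transferMatrix (σp σm τp τm : R) :
    ConjAct.toConjAct (polarBasis R) •
        transferMatrix (σp + σm) (τp + τm) (σp + τm) (σm + τp) =
      !![σm - τm, σp + τm; 0, σp - τp] := by
  have hmul : (polarBasis R : Matrix (Fin 2) (Fin 2) R) *
        transferMatrix (σp + σm) (τp + τm) (σp + τm) (σm + τp) =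
      !![σm - τm, σp + τm; 0, σp - τp] * polarBasis R := by
    simp only [polarBasis, transferMatrix, mul_fin_two, one_mul, mul_one, zero_mul, mul_zero]
    congrm !![?_, ?_; ?_, ?_] <;> abel
  rw [ConjAct.units_smul_def, ConjAct.ofConjAct_toConjAct, hmul, Units.mul_inv_cancel_right]

end TransferMatrix

theorem box_cutting_equation_general {R : Type*} [CommRing R] {n : ℕ}
    (σp σm τp τm z w u v : Fin n → R)
    (hz : ∀ i, z i = σp i + σm i) (hw : ∀ i, w i = τp i + τm i)
    (hu : ∀ i, u i = σp i + τm i) (hv : ∀ i, v i = σm i + τp i) :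
    (List.ofFn fun i ↦ transferMatrix (z i) (w i) (u i) (v i)).prod.trace =
      (∏ i, (σp i - τp i)) + ∏ i, (σm i - τm i) := by
  let T (i : Fin n) : Matrix (Fin 2) (Fin 2) R := !![σm i - τm i, σp i + τm i; 0, σp i - τp i]
  have hconj (i : Fin n) : ConjAct.toConjAct (polarBasis R) •
      transferMatrix (z i) (w i) (u i) (v i) = T i := by
    rw [hz, hw, hu, hv, polarBasis_smul_transferMatrix]
  have hT : ∀ A ∈ List.ofFn T, A.IsUpperTriangular :=
    List.forall_mem_ofFn_iff.mpr fun _ ↦ isUpperTriangular_fin_two _ _ _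
  calc
    _ = (List.ofFn T).prod.trace := by
      rw [← trace_list_prod_map_conj (ConjAct.toConjAct (polarBasis R)), List.map_ofFn]
      exact congrArg (fun f ↦ (List.ofFn f).prod.trace) (funext hconj)
    _ = ∑ j, ∏ i, T i j j := by
      rw [trace, diag_list_prod_of_isUpperTriangular hT, List.map_ofFn, List.prod_ofFn]
      simp only [Finset.prod_apply, Function.comp_apply, diag_apply]
    _ = (∏ i, (σp i - τp i)) + ∏ i, (σm i - τm i) :=
      (Fin.sum_univ_two _).trans (add_comm _ _)

theorem trace_prod_transferMatrix_four {R : Type*} [CommRing R] (z w u v : Fin 4 → R) :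
    (List.ofFn fun i ↦ transferMatrix (z i) (w i) (u i) (v i)).prod.trace =
      z 0 * z 1 * z 2 * z 3 + w 0 * w 1 * w 2 * w 3
      - u 0 * v 1 * z 2 * z 3 + u 0 * w 1 * v 2 * z 3 - u 0 * w 1 * w 2 * v 3
      - z 0 * u 1 * v 2 * z 3 + z 0 * u 1 * w 2 * v 3 - v 0 * u 1 * w 2 * w 3
      - z 0 * z 1 * u 2 * v 3 + v 0 * z 1 * u 2 * w 3 - w 0 * v 1 * u 2 * w 3
      - v 0 * z 1 * z 2 * u 3 + w 0 * v 1 * z 2 * u 3 - w 0 * w 1 * v 2 * u 3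
      + v 0 * u 1 * v 2 * u 3 + u 0 * v 1 * u 2 * v 3 := by
  simp only [List.ofFn_succ, List.ofFn_zero, List.prod_cons, List.prod_nil, mul_one,
    transferMatrix, mul_fin_two, trace_fin_two_of, Fin.succ_zero_eq_one, Fin.succ_one_eq_two,
    Fin.reduceSucc]
  ring

theorem box_cutting_equation {R : Type*} [CommRing R]
    (σp σm τp τm : Fin 4 → R)
    (z w u v : Fin 4 → R)
    (hz : ∀ i, z i = σp i + σm i)
    (hw : ∀ i, w i = τp i + τm i)
    (hu : ∀ i, u i = σp i + τm i)
    (hv : ∀ i, v i = σm i + τp i) :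
    z 0 * z 1 * z 2 * z 3 + w 0 * w 1 * w 2 * w 3
      - u 0 * v 1 * z 2 * z 3 + u 0 * w 1 * v 2 * z 3 - u 0 * w 1 * w 2 * v 3
      - z 0 * u 1 * v 2 * z 3 + z 0 * u 1 * w 2 * v 3 - v 0 * u 1 * w 2 * w 3
      - z 0 * z 1 * u 2 * v 3 + v 0 * z 1 * u 2 * w 3 - w 0 * v 1 * u 2 * w 3
      - v 0 * z 1 * z 2 * u 3 + w 0 * v 1 * z 2 * u 3 - w 0 * w 1 * v 2 * u 3
      + v 0 * u 1 * v 2 * u 3 + u 0 * v 1 * u 2 * v 3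
    = (∏ i : Fin 4, (σp i - τp i)) + (∏ i : Fin 4, (σm i - τm i)) :=
  (trace_prod_transferMatrix_four z w u v).symm.trans
    (box_cutting_equation_general σp σm τp τm z w u v hz hw hu hv)
end

section
/- Let R be a commutative ring, n ≥ 1 a natural number, and σ⁺, σ⁻, τ⁺, τ⁻ : Fin n → R four families of elements. For a subset M ⊆ Fin n (the set of marked vertices) and each leg i ∈ Fin n (oriented from vertex i to vertex i+1, indices mod n), define the propagator p(M,i) by: p(M,i) = σᵢ⁺ + σᵢ⁻ if i ∉ M and i+1 ∉ M; p(M,i) = σᵢ⁺ + τᵢ⁻ if i ∉ M and i+1 ∈ M; p(M,i) = σᵢ⁻ + τᵢ⁺ if i ∈ M and i+1 ∉ M; p(M,i) = τᵢ⁺ + τᵢ⁻ if i ∈ M and i+1 ∈ M. Then ∑_{M ⊆ Fin n} (−1)^{|M|} ∏_{i ∈ Fin n} p(M,i) = ∏_{i ∈ Fin n} (σᵢ⁺ − τᵢ⁺) + ∏_{i ∈ Fin n} (σᵢ⁻ − τᵢ⁻). -/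
/-- The propagator of leg `i` (oriented from vertex `i` to vertex `i + 1`, indices mod `n`)
in the one-loop diagram, for a marking `M` of the vertices. -/
def oneLoopPropagator {n : ℕ} {R : Type*} [CommRing R]
    (σp σm τp τm : Fin (n + 1) → R) (M : Finset (Fin (n + 1))) (i : Fin (n + 1)) : R :=
  if i ∈ M then
    (if i + 1 ∈ M then τp i + τm i else σm i + τp i)
  else
    (if i + 1 ∈ M then σp i + τm i else σp i + σm i)

/-!
Every propagator is a sum of a term that depends only on the marking of the tail of its leg and a
term that depends only on the marking of the head. Expanding the product of the propagators
therefore assigns each leg to one of its endpoints; for a fixed assignment the signed sum over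
markings factors over the vertices, each vertex contributing the product of the `σ` assigned to it
minus the product of the `τ`. A vertex to which no leg is assigned contributes `1 - 1 = 0`. On a
cycle, the only assignments leaving no vertex empty send all legs to their tails or all legs to
their heads, and these are the two terms on the right-hand side.
-/

open Equiv

theorem sum_neg_one_pow_card_mul_prod_ite {α R : Type*} [Fintype α] [DecidableEq α] [CommRing R]
    (f g : α → R) :
    ∑ M : Finset α, (-1) ^ M.card * ∏ v, (if v ∈ M then g v else f v) = ∏ v, (f v - g v) := by
  rw [Finset.prod_sub, Finset.powerset_univ]
  refine Finset.sum_congr rfl fun M _ => ?_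
  rw [Finset.prod_ite, Finset.filter_univ_mem, Finset.filter_notMem_eq_sdiff, mul_assoc,
    mul_comm (∏ v ∈ M, g v)]

theorem eq_univ_of_isCycleOn_of_apply_mem {α : Type*} [Fintype α] {e : Perm α}
    (he : e.IsCycleOn Set.univ) {S : Finset α} (hS : S.Nonempty) (hmem : ∀ i ∈ S, e i ∈ S) :
    S = Finset.univ := by
  obtain ⟨i, hi⟩ := hS
  refine Finset.eq_univ_of_forall fun j => ?_
  obtain ⟨k, rfl⟩ := (he.2 (Set.mem_univ i) (Set.mem_univ j)).exists_nat_pow_eq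
  rw [← Perm.iterate_eq_pow]
  exact Set.MapsTo.iterate (s := (S : Set α)) hmem k hi

theorem isCycleOn_univ_finRotate (n : ℕ) : (finRotate n).IsCycleOn Set.univ := by
  obtain hn | hn := Nat.lt_or_ge 1 n
  · have moved : {i | finRotate n i ≠ i} = Set.univ := by
      rw [← Perm.coe_support_eq_set_support, support_finRotate_of_le hn, Finset.coe_univ]
    exact moved ▸ (isCycle_finRotate_of_le hn).isCycleOn
  · have : Subsingleton (Fin n) := Fin.subsingleton_iff_le_one.mpr hn
    exact Perm.isCycleOn_of_subsingleton _ _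

section VertexFactor

variable {α R : Type*} [DecidableEq α]

/-- The factor collected at the vertex `v` when every leg `i`, running from vertex `i` to vertex
`e i`, gives `a i` to its tail if `i ∈ S` and `b i` to its head otherwise. Since `e` is a
permutation, the legs at `v` are the outgoing leg `v` and the incoming leg `e.symm v`. -/
def vertexFactor [MulOneClass R] (e : Perm α) (S : Finset α) (a b : α → R) (v : α) : R :=
  (if v ∈ S then a v else 1) * (if e.symm v ∈ S then 1 else b (e.symm v))

theorem vertexFactor_apply_eq_one [MulOneClass R] {e : Perm α} {S : Finset α} {i : α}
    (hi : i ∈ S) (hei : e i ∉ S) (a b : α → R) : vertexFactor e S a b (e i) = 1 := by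
  simp [vertexFactor, hi, hei]

theorem vertexFactor_ite [MulOneClass R] (e : Perm α) (S M : Finset α) (a a' b b' : α → R)
    (v : α) :
    vertexFactor e S (fun i => if i ∈ M then a' i else a i)
        (fun i => if e i ∈ M then b' i else b i) v =
      if v ∈ M then vertexFactor e S a' b' v else vertexFactor e S a b v := by
  by_cases hv : v ∈ M <;> simp [vertexFactor, hv]

variable [Fintype α]

theorem prod_vertexFactor [CommMonoid R] (e : Perm α) (S : Finset α) (a b : α → R) :
    ∏ v, vertexFactor e S a b v = (∏ i ∈ S, a i) * ∏ i ∈ Sᶜ, b i := by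
  have tails : ∏ v, (if v ∈ S then a v else 1) = ∏ i ∈ S, a i := Finset.prod_ite_mem_eq S a
  have heads : ∏ v, (if e.symm v ∈ S then 1 else b (e.symm v)) = ∏ i ∈ Sᶜ, b i := by
    rw [e.symm.prod_comp fun i => if i ∈ S then 1 else b i, ← Finset.prod_ite_mem_eq Sᶜ b]
    simp only [Finset.mem_compl, ite_not]
  simp only [vertexFactor, Finset.prod_mul_distrib, tails, heads]

variable [CommRing R]

theorem sum_markings_eq_sum_prod_vertexFactor_sub (e : Perm α) (σp σm τp τm : α → R) :
    ∑ M : Finset α, (-1) ^ M.card *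
        ∏ i, ((if i ∈ M then τp i else σp i) + (if e i ∈ M then τm i else σm i)) =
      ∑ S : Finset α, ∏ v, (vertexFactor e S σp σm v - vertexFactor e S τp τm v) := by
  simp only [Fintype.prod_add, ← prod_vertexFactor e, vertexFactor_ite, Finset.mul_sum]
  rw [Finset.sum_comm]
  simp only [sum_neg_one_pow_card_mul_prod_ite]

theorem prod_vertexFactor_sub_univ (e : Perm α) (σp σm τp τm : α → R) :
    ∏ v, (vertexFactor e Finset.univ σp σm v - vertexFactor e Finset.univ τp τm v) =
      ∏ i, (σp i - τp i) := by
  simp [vertexFactor]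

theorem prod_vertexFactor_sub_empty (e : Perm α) (σp σm τp τm : α → R) :
    ∏ v, (vertexFactor e ∅ σp σm v - vertexFactor e ∅ τp τm v) = ∏ i, (σm i - τm i) := by
  simpa [vertexFactor] using e.symm.prod_comp fun i => σm i - τm i

theorem prod_vertexFactor_sub_eq_zero {e : Perm α} (he : e.IsCycleOn Set.univ) {S : Finset α}
    (hS : S.Nonempty) (hS' : S ≠ Finset.univ) (σp σm τp τm : α → R) :
    ∏ v, (vertexFactor e S σp σm v - vertexFactor e S τp τm v) = 0 := by
  obtain ⟨i, hi, hei⟩ : ∃ i ∈ S, e i ∉ S := by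
    contrapose! hS'
    exact eq_univ_of_isCycleOn_of_apply_mem he hS hS'
  apply Finset.prod_eq_zero (Finset.mem_univ (e i))
  rw [vertexFactor_apply_eq_one hi hei, vertexFactor_apply_eq_one hi hei, sub_self]

theorem oneLoop_cutting_equation_general [Nonempty α] {e : Perm α} (he : e.IsCycleOn Set.univ)
    (σp σm τp τm : α → R) :
    ∑ M : Finset α, (-1) ^ M.card *
        ∏ i, ((if i ∈ M then τp i else σp i) + (if e i ∈ M then τm i else σm i)) =
      ∏ i, (σp i - τp i) + ∏ i, (σm i - τm i) := by
  rw [sum_markings_eq_sum_prod_vertexFactor_sub,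
    Fintype.sum_eq_add Finset.univ ∅ Finset.univ_nonempty.ne_empty fun S hS =>
      prod_vertexFactor_sub_eq_zero he (Finset.nonempty_iff_ne_empty.mpr hS.2) hS.1 ..,
    prod_vertexFactor_sub_univ, prod_vertexFactor_sub_empty]

end VertexFactor

theorem oneLoopPropagator_eq_add {n : ℕ} {R : Type*} [CommRing R] (σp σm τp τm : Fin (n + 1) → R)
    (M : Finset (Fin (n + 1))) (i : Fin (n + 1)) :
    oneLoopPropagator σp σm τp τm M i =
      (if i ∈ M then τp i else σp i) + (if finRotate (n + 1) i ∈ M then τm i else σm i) := by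
  rw [oneLoopPropagator, finRotate_apply]
  split_ifs <;> first | rfl | exact add_comm _ _

theorem oneLoop_cutting_equation (n : ℕ) {R : Type*} [CommRing R]
    (σp σm τp τm : Fin (n + 1) → R) :
    ∑ M : Finset (Fin (n + 1)),
        (-1 : R) ^ M.card * ∏ i : Fin (n + 1), oneLoopPropagator σp σm τp τm M i
    = (∏ i : Fin (n + 1), (σp i - τp i)) + (∏ i : Fin (n + 1), (σm i - τm i)) := by
  simp only [oneLoopPropagator_eq_add]
  exact oneLoop_cutting_equation_general (isCycleOn_univ_finRotate (n + 1)) σp σm τp τm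
end

section
/- Let V be a finite type, G a simple graph on V that is a tree, and for each edge of G fix an orientation, i.e., an ordered pair (tail, head) of its two endpoints. Let R be a commutative ring and let σ⁺, σ⁻, τ⁺, τ⁻ assign to each edge e of G four elements σₑ⁺, σₑ⁻, τₑ⁺, τₑ⁻ of R. For a subset M ⊆ V and an edge e with tail a and head b, define the propagator p(M,e) by: σₑ⁺ + σₑ⁻ if a ∉ M, b ∉ M; σₑ⁺ + τₑ⁻ if a ∉ M, b ∈ M; σₑ⁻ + τₑ⁺ if a ∈ M, b ∉ M; τₑ⁺ + τₑ⁻ if a ∈ M, b ∈ M. Then ∑_{M ⊆ V} (−1)^{|M|} ∏_{e ∈ edges of G} p(M,e) = 0. -/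
/-- The propagator of an oriented edge `e` (with tail `tail e` and head `head e`)
for a marking `M` of the vertices. -/
def treePropagator {V : Type*} [DecidableEq V] {R : Type*} [CommRing R]
    (tail head : Sym2 V → V) (σp σm τp τm : Sym2 V → R)
    (M : Finset V) (e : Sym2 V) : R :=
  if tail e ∈ M then
    (if head e ∈ M then τp e + τm e else σm e + τp e)
  else
    (if head e ∈ M then σp e + τm e else σp e + σm e)

/-!
A propagator is a sum of two terms, each depending on the marking of a single endpoint. Expanding
the product of the propagators therefore amounts to choosing one endpoint of every edge. A tree has
fewer edges than vertices, so each choice misses some vertex `v`; the corresponding term does not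
depend on the marking of `v`, and the markings with and without `v` cancel in pairs.
-/

section CuttingEquation

variable {V ι R : Type*} [DecidableEq V]

lemma sum_powerset_neg_one_pow_card_mul_eq_zero [Ring R] {U : Finset V} {v : V} (hv : v ∈ U)
    {f : Finset V → R} (hf : ∀ M ⊆ U.erase v, f (insert v M) = f M) :
    ∑ M ∈ U.powerset, (-1) ^ M.card * f M = 0 := by
  rw [← Finset.insert_erase hv, Finset.sum_powerset_insert (Finset.notMem_erase v U),
    ← Finset.sum_add_distrib]
  refine Finset.sum_eq_zero fun M hM => ?_
  have hMU : M ⊆ U.erase v := Finset.mem_powerset.1 hM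
  have hvM : v ∉ M := fun h => Finset.notMem_erase v U (hMU h)
  rw [hf M hMU, Finset.card_insert_of_notMem hvM, pow_succ, mul_neg_one, neg_mul, add_neg_cancel]

variable [CommRing R]

lemma sum_powerset_neg_one_pow_card_mul_prod_ite_eq_zero {U : Finset V} {E : Finset ι}
    (hEU : E.card < U.card) (x : ι → V) (σ τ : ι → R) :
    ∑ M ∈ U.powerset, (-1) ^ M.card * ∏ e ∈ E, (if x e ∈ M then τ e else σ e) = 0 := by
  obtain ⟨v, hvU, hvE⟩ : ∃ v ∈ U, v ∉ E.image x :=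
    Finset.exists_mem_notMem_of_card_lt_card (Finset.card_image_le.trans_lt hEU)
  refine sum_powerset_neg_one_pow_card_mul_eq_zero hvU fun M _ =>
    Finset.prod_congr rfl fun e he => ?_
  have hev : x e ≠ v := fun h => hvE (h ▸ Finset.mem_image_of_mem x he)
  simp only [Finset.mem_insert, hev, false_or]

/-- Edges are arbitrary finite families of half-edges: `κ e` indexes the half-edges of `e`, and
`x e i` is the vertex at which the half-edge `i` ends. Vertices outside `U` stay unmarked. -/
theorem tree_cutting_equation_general {κ : ι → Type*} [∀ e, Fintype (κ e)] {U : Finset V}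
    {E : Finset ι} (hEU : E.card < U.card) (x : ∀ e, κ e → V) (σ τ : ∀ e, κ e → R) :
    ∑ M ∈ U.powerset,
      (-1) ^ M.card * ∏ e ∈ E, ∑ i, (if x e i ∈ M then τ e i else σ e i) = 0 := by
  classical
  simp_rw [Finset.prod_sum, Finset.mul_sum]
  rw [Finset.sum_comm]
  refine Finset.sum_eq_zero fun c _ => ?_
  exact sum_powerset_neg_one_pow_card_mul_prod_ite_eq_zero (E.card_attach.trans_lt hEU)
    (fun e => x e (c e e.2)) (fun e => σ e (c e e.2)) (fun e => τ e (c e e.2))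

lemma treePropagator_eq_sum (tail head : Sym2 V → V) (σp σm τp τm : Sym2 V → R)
    (M : Finset V) (e : Sym2 V) :
    treePropagator tail head σp σm τp τm M e =
      ∑ i : Bool, if (bif i then tail e else head e) ∈ M
        then (bif i then τp e else τm e) else (bif i then σp e else σm e) := by
  simp only [treePropagator, Fintype.sum_bool, cond_true, cond_false]
  split_ifs <;> ring

end CuttingEquation

theorem tree_cutting_equation {V : Type*} [Fintype V] [DecidableEq V]
    (G : SimpleGraph V) [DecidableRel G.Adj] (hG : G.IsTree)
    (tail head : Sym2 V → V)
    (horient : ∀ e ∈ G.edgeSet, e = s(tail e, head e))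
    {R : Type*} [CommRing R] (σp σm τp τm : Sym2 V → R) :
    ∑ M : Finset V,
        (-1 : R) ^ M.card * ∏ e ∈ G.edgeFinset, treePropagator tail head σp σm τp τm M e
    = 0 := by
  have hcard : G.edgeFinset.card < (Finset.univ : Finset V).card :=
    Nat.lt_of_succ_le hG.card_edgeFinset.le
  simp_rw [treePropagator_eq_sum, ← Finset.powerset_univ]
  exact tree_cutting_equation_general hcard _ _ _
end

section
/- Work in the multivariate polynomial ring over ℤ in the 16 variables σᵢ⁺, σᵢ⁻, τᵢ⁺, τᵢ⁻ (i = 1, 2, 3, 4), and set zᵢ = σᵢ⁺ + σᵢ⁻, wᵢ = τᵢ⁺ + τᵢ⁻, uᵢ = σᵢ⁺ + τᵢ⁻, vᵢ = σᵢ⁻ + τᵢ⁺. Then the polynomial z₁z₂z₃z₄ − w₁w₂w₃w₄ − u₁v₂z₃z₄ − v₁z₂u₃v₄ − z₁u₂v₃u₄ + v₁u₂w₃w₄ + u₁w₂v₃u₄ + w₁v₂u₃v₄ lies in the ℤ-submodule spanned by the following monomials: (A) ρ₁ρ₂ρ₃η₄ with ρᵢ ∈ {σᵢ⁺, τᵢ⁺}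 for i = 1, 2, 3 and η₄ ∈ {σ₄⁺, σ₄⁻, τ₄⁺, τ₄⁻}; (B) ρ₁ρ₂ρ₃η₄ with ρᵢ ∈ {σᵢ⁻, τᵢ⁻} for i = 1, 2, 3 and η₄ arbitrary among the four variables of leg 4; (C) η₁η₂ρ₃ρ₄ with ρ₃ ∈ {σ₃⁺, τ₃⁺}, ρ₄ ∈ {σ₄⁺, τ₄⁺} and η₁, η₂ arbitrary among the four variables of legs 1 and 2 respectively; (D) η₁η₂ρ₃ρ₄ with ρ₃ ∈ {σ₃⁻, τ₃⁻}, ρ₄ ∈ {σ₄⁻, τ₄⁻} and η₁, η₂ arbitrary. -/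
open MvPolynomial

/-- The 16 variables `σᵢ⁺, σᵢ⁻, τᵢ⁺, τᵢ⁻` (`i = 1,…,4`) of the chestnut diagram:
the first index is the leg, the second selects among `σ⁺, σ⁻, τ⁺, τ⁻`. -/
noncomputable def chSp (i : Fin 4) : MvPolynomial (Fin 4 × Fin 4) ℤ := X (i, 0)
noncomputable def chSm (i : Fin 4) : MvPolynomial (Fin 4 × Fin 4) ℤ := X (i, 1)
noncomputable def chTp (i : Fin 4) : MvPolynomial (Fin 4 × Fin 4) ℤ := X (i, 2)
noncomputable def chTm (i : Fin 4) : MvPolynomial (Fin 4 × Fin 4) ℤ := X (i, 3)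

noncomputable def chZ (i : Fin 4) : MvPolynomial (Fin 4 × Fin 4) ℤ := chSp i + chSm i
noncomputable def chW (i : Fin 4) : MvPolynomial (Fin 4 × Fin 4) ℤ := chTp i + chTm i
noncomputable def chU (i : Fin 4) : MvPolynomial (Fin 4 × Fin 4) ℤ := chSp i + chTm i
noncomputable def chV (i : Fin 4) : MvPolynomial (Fin 4 × Fin 4) ℤ := chSm i + chTp i

/-- The positively polarized variables `{σᵢ⁺, τᵢ⁺}` of leg `i`. -/
def chPlus (i : Fin 4) : Set (MvPolynomial (Fin 4 × Fin 4) ℤ) := {chSp i, chTp i}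
/-- The negatively polarized variables `{σᵢ⁻, τᵢ⁻}` of leg `i`. -/
def chMinus (i : Fin 4) : Set (MvPolynomial (Fin 4 × Fin 4) ℤ) := {chSm i, chTm i}
/-- All four variables of leg `i`. -/
def chAny (i : Fin 4) : Set (MvPolynomial (Fin 4 × Fin 4) ℤ) :=
  {chSp i, chSm i, chTp i, chTm i}

/-- The polarized monomials of the chestnut diagram, whose oriented loops are `123` and `34`. -/
def chestnutPolarized : Set (MvPolynomial (Fin 4 × Fin 4) ℤ) :=
  {q | ∃ r₁ ∈ chPlus 0, ∃ r₂ ∈ chPlus 1, ∃ r₃ ∈ chPlus 2, ∃ e₄ ∈ chAny 3,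
      q = r₁ * r₂ * r₃ * e₄} ∪
  {q | ∃ r₁ ∈ chMinus 0, ∃ r₂ ∈ chMinus 1, ∃ r₃ ∈ chMinus 2, ∃ e₄ ∈ chAny 3,
      q = r₁ * r₂ * r₃ * e₄} ∪
  {q | ∃ e₁ ∈ chAny 0, ∃ e₂ ∈ chAny 1, ∃ r₃ ∈ chPlus 2, ∃ r₄ ∈ chPlus 3,
      q = e₁ * e₂ * r₃ * r₄} ∪
  {q | ∃ e₁ ∈ chAny 0, ∃ e₂ ∈ chAny 1, ∃ r₃ ∈ chMinus 2, ∃ r₄ ∈ chMinus 3,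
      q = e₁ * e₂ * r₃ * r₄}

/-! Sort the expansion by signs on legs 3 and 4. Equal signs polarize the loop `34`. For opposite
signs, say `+` on leg 3 and `-` on leg 4, both `z₃z₄` and `u₃v₄` contribute `σ₃⁺σ₄⁻`, so its
coefficient is the sum of theirs. Since `z + w = u + v` on each leg, that sum factors as
`(z₁ - v₁)(z₂ - v₂) = (σ₁⁺ - τ₁⁺)(σ₂⁺ - τ₂⁺)`, which together with `σ₃⁺` polarizes the loop `123`.
The coefficient of `τ₃⁺τ₄⁻` is the negative of this, and the reverse signs give
`±(z₁ - u₁)(z₂ - u₂) = ±(σ₁⁻ - τ₁⁻)(σ₂⁻ - τ₂⁻)`. -/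

open Submodule
open scoped Pointwise

/-- The polar variables `σ⁺, σ⁻, τ⁺, τ⁻` of one leg, with values in any module: the positive ones
lie in the submodule `P` and the negative ones in `N`. With `P` and `N` as parameters, products
of submodules record which polarized loops occur. -/
structure PolarLeg {R A : Type*} [Semiring R] [AddCommMonoid A] [Module R A]
    (P N : Submodule R A) where
  sp : A
  sm : A
  tp : A
  tm : A
  sp_mem : sp ∈ P
  sm_mem : sm ∈ N
  tp_mem : tp ∈ P
  tm_mem : tm ∈ N

namespace PolarLeg

variable {R A : Type*}

section Propagators

variable [Semiring R] [AddCommMonoid A] [Module R A] {P N : Submodule R A} (L : PolarLeg P N)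

/-- The propagator `z = σ⁺ + σ⁻`. -/
def z : A := L.sp + L.sm

/-- The propagator `w = τ⁺ + τ⁻`. -/
def w : A := L.tp + L.tm

/-- The propagator `u = σ⁺ + τ⁻`. -/
def u : A := L.sp + L.tm

/-- The propagator `v = σ⁻ + τ⁺`. -/
def v : A := L.sm + L.tp

lemma z_mem : L.z ∈ P ⊔ N := add_mem_sup L.sp_mem L.sm_mem

lemma w_mem : L.w ∈ P ⊔ N := add_mem_sup L.tp_mem L.tm_mem

lemma u_mem : L.u ∈ P ⊔ N := add_mem_sup L.sp_mem L.tm_mem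

lemma v_mem : L.v ∈ P ⊔ N := sup_comm P N ▸ add_mem_sup L.sm_mem L.tp_mem

end Propagators

section Differences

variable [Ring R] [AddCommGroup A] [Module R A] {P N : Submodule R A} (L : PolarLeg P N)

lemma u_sub_w : L.u - L.w = L.z - L.v := by
  simp only [z, w, u, v]
  abel

lemma v_sub_w : L.v - L.w = L.z - L.u := by
  simp only [z, w, u, v]
  abel

lemma z_sub_v : L.z - L.v = L.sp - L.tp := by
  simp only [z, v]
  abel

lemma z_sub_u : L.z - L.u = L.sm - L.tm := by
  simp only [z, u]
  abel

lemma z_sub_v_mem : L.z - L.v ∈ P := L.z_sub_v ▸ sub_mem L.sp_mem L.tp_mem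

lemma z_sub_u_mem : L.z - L.u ∈ N := L.z_sub_u ▸ sub_mem L.sm_mem L.tm_mem

end Differences

section TwoLegExpansion

variable [CommSemiring R] [Semiring A] [Algebra R A] {P N Q M : Submodule R A}
  (K : PolarLeg P N) (L : PolarLeg Q M)

lemma two_leg_expansion (a b c d : A) :
    a * K.z * L.z + b * K.w * L.w + c * K.u * L.v + d * K.v * L.u =
      ((a + c) * K.sp * L.sm + (b + d) * K.tp * L.tm) +
      ((a + d) * K.sm * L.sp + (b + c) * K.tm * L.tp) +
      (a * K.sp * L.sp + b * K.tp * L.tp + c * K.sp * L.tp + d * K.tp * L.sp) +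
      (a * K.sm * L.sm + b * K.tm * L.tm + c * K.tm * L.sm + d * K.sm * L.tm) := by
  simp only [z, w, u, v, mul_add, add_mul]
  abel

lemma two_leg_mem {E F G : Submodule R A} {a b c d : A}
    (ha : a ∈ E) (hb : b ∈ E) (hc : c ∈ E) (hd : d ∈ E)
    (hac : a + c ∈ F) (hbd : b + d ∈ F) (had : a + d ∈ G) (hbc : b + c ∈ G) :
    a * K.z * L.z + b * K.w * L.w + c * K.u * L.v + d * K.v * L.u ∈
      F * P * M ⊔ G * N * Q ⊔ E * P * Q ⊔ E * N * M := by
  have mul₃ {S T U : Submodule R A} {r s t : A} (hr : r ∈ S) (hs : s ∈ T) (ht : t ∈ U) :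
      r * s * t ∈ S * T * U := mul_mem_mul (mul_mem_mul hr hs) ht
  rw [two_leg_expansion]
  refine add_mem_sup (add_mem_sup (add_mem_sup ?_ ?_) ?_) ?_
  · exact add_mem (mul₃ hac K.sp_mem L.sm_mem) (mul₃ hbd K.tp_mem L.tm_mem)
  · exact add_mem (mul₃ had K.sm_mem L.sp_mem) (mul₃ hbc K.tm_mem L.tp_mem)
  · exact add_mem (add_mem (add_mem (mul₃ ha K.sp_mem L.sp_mem) (mul₃ hb K.tp_mem L.tp_mem))
      (mul₃ hc K.sp_mem L.tp_mem)) (mul₃ hd K.tp_mem L.sp_mem)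
  · exact add_mem (add_mem (add_mem (mul₃ ha K.sm_mem L.sm_mem) (mul₃ hb K.tm_mem L.tm_mem))
      (mul₃ hc K.tm_mem L.sm_mem)) (mul₃ hd K.sm_mem L.tm_mem)

end TwoLegExpansion

section Coefficients

variable [CommRing R] [Ring A] [Algebra R A] {P N Q M : Submodule R A}
  (K : PolarLeg P N) (L : PolarLeg Q M)

/-- The coefficient of `z₃z₄` in the cutting equation, in terms of legs 1 and 2. -/
def zzCoeff : A := K.z * L.z - K.u * L.v

/-- The coefficient of `w₃w₄` in the cutting equation, in terms of legs 1 and 2. -/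
def wwCoeff : A := K.v * L.u - K.w * L.w

/-- The coefficient of `u₃v₄` in the cutting equation, in terms of legs 1 and 2. -/
def uvCoeff : A := K.w * L.v - K.v * L.z

/-- The coefficient of `v₃u₄` in the cutting equation, in terms of legs 1 and 2. -/
def vuCoeff : A := K.u * L.w - K.z * L.u

lemma zzCoeff_mem : K.zzCoeff L ∈ (P ⊔ N) * (Q ⊔ M) :=
  sub_mem (mul_mem_mul K.z_mem L.z_mem) (mul_mem_mul K.u_mem L.v_mem)

lemma wwCoeff_mem : K.wwCoeff L ∈ (P ⊔ N) * (Q ⊔ M) :=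
  sub_mem (mul_mem_mul K.v_mem L.u_mem) (mul_mem_mul K.w_mem L.w_mem)

lemma uvCoeff_mem : K.uvCoeff L ∈ (P ⊔ N) * (Q ⊔ M) :=
  sub_mem (mul_mem_mul K.w_mem L.v_mem) (mul_mem_mul K.v_mem L.z_mem)

lemma vuCoeff_mem : K.vuCoeff L ∈ (P ⊔ N) * (Q ⊔ M) :=
  sub_mem (mul_mem_mul K.u_mem L.w_mem) (mul_mem_mul K.z_mem L.u_mem)

lemma zzCoeff_add_uvCoeff : K.zzCoeff L + K.uvCoeff L = (K.z - K.v) * (L.z - L.v) :=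
  calc
    K.zzCoeff L + K.uvCoeff L = (K.z - K.v) * L.z - (K.u - K.w) * L.v := by
      simp only [zzCoeff, uvCoeff]
      noncomm_ring
    _ = (K.z - K.v) * (L.z - L.v) := by rw [u_sub_w, mul_sub]

lemma wwCoeff_add_vuCoeff : K.wwCoeff L + K.vuCoeff L = -((K.z - K.v) * (L.z - L.v)) :=
  calc
    K.wwCoeff L + K.vuCoeff L = (K.u - K.w) * L.w - (K.z - K.v) * L.u := by
      simp only [wwCoeff, vuCoeff]
      noncomm_ring
    _ = -((K.z - K.v) * (L.z - L.v)) := by rw [← L.u_sub_w, K.u_sub_w, mul_sub, neg_sub]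

lemma zzCoeff_add_vuCoeff : K.zzCoeff L + K.vuCoeff L = (K.z - K.u) * (L.z - L.u) :=
  calc
    K.zzCoeff L + K.vuCoeff L = K.z * (L.z - L.u) - K.u * (L.v - L.w) := by
      simp only [zzCoeff, vuCoeff]
      noncomm_ring
    _ = (K.z - K.u) * (L.z - L.u) := by rw [v_sub_w, sub_mul]

lemma wwCoeff_add_uvCoeff : K.wwCoeff L + K.uvCoeff L = -((K.z - K.u) * (L.z - L.u)) :=
  calc
    K.wwCoeff L + K.uvCoeff L = K.w * (L.v - L.w) - K.v * (L.z - L.u) := by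
      simp only [wwCoeff, uvCoeff]
      noncomm_ring
    _ = -((K.z - K.u) * (L.z - L.u)) := by rw [← K.v_sub_w, L.v_sub_w, sub_mul, neg_sub]

lemma zzCoeff_add_uvCoeff_mem : K.zzCoeff L + K.uvCoeff L ∈ P * Q :=
  K.zzCoeff_add_uvCoeff L ▸ mul_mem_mul K.z_sub_v_mem L.z_sub_v_mem

lemma wwCoeff_add_vuCoeff_mem : K.wwCoeff L + K.vuCoeff L ∈ P * Q :=
  K.wwCoeff_add_vuCoeff L ▸ neg_mem (mul_mem_mul K.z_sub_v_mem L.z_sub_v_mem)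

lemma zzCoeff_add_vuCoeff_mem : K.zzCoeff L + K.vuCoeff L ∈ N * M :=
  K.zzCoeff_add_vuCoeff L ▸ mul_mem_mul K.z_sub_u_mem L.z_sub_u_mem

lemma wwCoeff_add_uvCoeff_mem : K.wwCoeff L + K.uvCoeff L ∈ N * M :=
  K.wwCoeff_add_uvCoeff L ▸ neg_mem (mul_mem_mul K.z_sub_u_mem L.z_sub_u_mem)

end Coefficients

end PolarLeg

/-- The submodule of polarized elements of the chestnut diagram with oriented loops `123` and `34`,
when the positive and the negative variables of each leg range over `P` and `N`. Legs are indexed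
from `0`. -/
def chestnutPolarizedSubmodule {R A : Type*} [CommSemiring R] [Semiring A] [Algebra R A]
    (P N : Fin 4 → Submodule R A) : Submodule R A :=
  P 0 * P 1 * P 2 * (P 3 ⊔ N 3) ⊔ N 0 * N 1 * N 2 * (P 3 ⊔ N 3) ⊔
    (P 0 ⊔ N 0) * (P 1 ⊔ N 1) * P 2 * P 3 ⊔ (P 0 ⊔ N 0) * (P 1 ⊔ N 1) * N 2 * N 3

theorem chestnut_cutting_equation_general {R A : Type*} [CommRing R] [Ring A] [Algebra R A]
    {P N : Fin 4 → Submodule R A} (L : ∀ i, PolarLeg (P i) (N i)) :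
    (L 0).z * (L 1).z * (L 2).z * (L 3).z - (L 0).w * (L 1).w * (L 2).w * (L 3).w
      - (L 0).u * (L 1).v * (L 2).z * (L 3).z - (L 0).v * (L 1).z * (L 2).u * (L 3).v
      - (L 0).z * (L 1).u * (L 2).v * (L 3).u + (L 0).v * (L 1).u * (L 2).w * (L 3).w
      + (L 0).u * (L 1).w * (L 2).v * (L 3).u + (L 0).w * (L 1).v * (L 2).u * (L 3).v
    ∈ chestnutPolarizedSubmodule P N := by
  have mem := (L 2).two_leg_mem (L 3)
    ((L 0).zzCoeff_mem (L 1)) ((L 0).wwCoeff_mem (L 1))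
    ((L 0).uvCoeff_mem (L 1)) ((L 0).vuCoeff_mem (L 1))
    ((L 0).zzCoeff_add_uvCoeff_mem (L 1)) ((L 0).wwCoeff_add_vuCoeff_mem (L 1))
    ((L 0).zzCoeff_add_vuCoeff_mem (L 1)) ((L 0).wwCoeff_add_uvCoeff_mem (L 1))
  have le_polarized : P 0 * P 1 * P 2 * N 3 ⊔ N 0 * N 1 * N 2 * P 3 ⊔
      (P 0 ⊔ N 0) * (P 1 ⊔ N 1) * P 2 * P 3 ⊔ (P 0 ⊔ N 0) * (P 1 ⊔ N 1) * N 2 * N 3 ≤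
      chestnutPolarizedSubmodule P N := by
    unfold chestnutPolarizedSubmodule
    gcongr
    exacts [le_sup_right, le_sup_left]
  convert le_polarized mem using 1
  simp only [PolarLeg.zzCoeff, PolarLeg.wwCoeff, PolarLeg.uvCoeff, PolarLeg.vuCoeff, sub_mul]
  abel

/-- Leg `i` of the chestnut diagram, each polar variable being placed in the span of the variables
of its sign. -/
noncomputable def chLeg (i : Fin 4) : PolarLeg (span ℤ (chPlus i)) (span ℤ (chMinus i)) where
  sp := chSp i
  sm := chSm i
  tp := chTp i
  tm := chTm i
  sp_mem := subset_span (.inl rfl)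
  sm_mem := subset_span (.inl rfl)
  tp_mem := subset_span (.inr rfl)
  tm_mem := subset_span (.inr rfl)

lemma chAny_eq_union (i : Fin 4) : chAny i = chPlus i ∪ chMinus i := by
  ext
  simp only [chAny, chPlus, chMinus, Set.mem_union, Set.mem_insert_iff, Set.mem_singleton_iff]
  tauto

lemma chestnutPolarized_eq_union :
    chestnutPolarized =
      chPlus 0 * chPlus 1 * chPlus 2 * chAny 3 ∪ chMinus 0 * chMinus 1 * chMinus 2 * chAny 3 ∪
        chAny 0 * chAny 1 * chPlus 2 * chPlus 3 ∪ chAny 0 * chAny 1 * chMinus 2 * chMinus 3 := by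
  ext
  simp [chestnutPolarized, Set.mem_mul, eq_comm, and_assoc]

lemma span_chestnutPolarized :
    span ℤ chestnutPolarized =
      chestnutPolarizedSubmodule (fun i ↦ span ℤ (chPlus i)) (fun i ↦ span ℤ (chMinus i)) := by
  simp only [chestnutPolarized_eq_union, chestnutPolarizedSubmodule, chAny_eq_union,
    span_union, ← span_mul_span]

theorem chestnut_cutting_equation :
    chZ 0 * chZ 1 * chZ 2 * chZ 3 - chW 0 * chW 1 * chW 2 * chW 3
      - chU 0 * chV 1 * chZ 2 * chZ 3 - chV 0 * chZ 1 * chU 2 * chV 3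
      - chZ 0 * chU 1 * chV 2 * chU 3 + chV 0 * chU 1 * chW 2 * chW 3
      + chU 0 * chW 1 * chV 2 * chU 3 + chW 0 * chV 1 * chU 2 * chV 3
    ∈ Submodule.span ℤ chestnutPolarized := by
  rw [span_chestnutPolarized]
  exact chestnut_cutting_equation_general chLeg
end

section
/- Work in the multivariate polynomial ring over ℤ in the 20 variables σᵢ⁺, σᵢ⁻, τᵢ⁺, τᵢ⁻ (i = 1, …, 5), and set zᵢ = σᵢ⁺ + σᵢ⁻, wᵢ = τᵢ⁺ + τᵢ⁻, uᵢ = σᵢ⁺ + τᵢ⁻, vᵢ = σᵢ⁻ + τᵢ⁺. Then the polynomial z₁z₂z₃z₄z₅ + w₁w₂w₃w₄w₅ − u₁v₂z₃z₄z₅ − z₁u₂v₃z₄u₅ − z₁z₂z₃u₄v₅ − v₁z₂u₃v₄z₅ + u₁w₂v₃z₄u₅ + u₁v₂z₃u₄v₅ + w₁v₂u₃v₄z₅ + v₁u₂w₃v₄u₅ + z₁u₂v₃u₄w₅ + v₁z₂u₃w₄v₅ − v₁u₂w₃w₄w₅ − w₁v₂u₃w₄v₅ − w₁w₂w₃v₄u₅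 − u₁w₂v₃u₄w₅ lies in the ℤ-submodule spanned by the following monomials: (A) ρ₁ρ₂ρ₃η₄η₅ with ρᵢ ∈ {σᵢ⁺, τᵢ⁺} for i = 1, 2, 3 and η₄, η₅ arbitrary among the four variables of legs 4 and 5; (B) ρ₁ρ₂ρ₃η₄η₅ with ρᵢ ∈ {σᵢ⁻, τᵢ⁻} for i = 1, 2, 3 and η₄, η₅ arbitrary; (C) η₁η₂ρ₃ρ₄ρ₅ with ρᵢ ∈ {σᵢ⁺, τᵢ⁺} for i = 3, 4, 5 and η₁, η₂ arbitrary; (D) η₁η₂ρ₃ρ₄ρ₅ with ρᵢ ∈ {σᵢ⁻, τᵢ⁻} for i = 3, 4, 5 and η₁, η₂ arbitrary. -/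
open MvPolynomial

/-- The 20 variables `σᵢ⁺, σᵢ⁻, τᵢ⁺, τᵢ⁻` (`i = 1,…,5`) of the two-loop self-energy diagram:
the first index is the leg, the second selects among `σ⁺, σ⁻, τ⁺, τ⁻`. -/
noncomputable def seSp (i : Fin 5) : MvPolynomial (Fin 5 × Fin 4) ℤ := X (i, 0)
noncomputable def seSm (i : Fin 5) : MvPolynomial (Fin 5 × Fin 4) ℤ := X (i, 1)
noncomputable def seTp (i : Fin 5) : MvPolynomial (Fin 5 × Fin 4) ℤ := X (i, 2)
noncomputable def seTm (i : Fin 5) : MvPolynomial (Fin 5 × Fin 4) ℤ := X (i, 3)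

noncomputable def seZ (i : Fin 5) : MvPolynomial (Fin 5 × Fin 4) ℤ := seSp i + seSm i
noncomputable def seW (i : Fin 5) : MvPolynomial (Fin 5 × Fin 4) ℤ := seTp i + seTm i
noncomputable def seU (i : Fin 5) : MvPolynomial (Fin 5 × Fin 4) ℤ := seSp i + seTm i
noncomputable def seV (i : Fin 5) : MvPolynomial (Fin 5 × Fin 4) ℤ := seSm i + seTp i

/-- The positively polarized variables `{σᵢ⁺, τᵢ⁺}` of leg `i`. -/
def sePlus (i : Fin 5) : Set (MvPolynomial (Fin 5 × Fin 4) ℤ) := {seSp i, seTp i}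
/-- The negatively polarized variables `{σᵢ⁻, τᵢ⁻}` of leg `i`. -/
def seMinus (i : Fin 5) : Set (MvPolynomial (Fin 5 × Fin 4) ℤ) := {seSm i, seTm i}
/-- All four variables of leg `i`. -/
def seAny (i : Fin 5) : Set (MvPolynomial (Fin 5 × Fin 4) ℤ) :=
  {seSp i, seSm i, seTp i, seTm i}

/-- The polarized monomials of the two-loop self-energy diagram,
whose oriented loops are `123` and `345`. -/
def selfEnergyPolarized : Set (MvPolynomial (Fin 5 × Fin 4) ℤ) :=
  {q | ∃ r₁ ∈ sePlus 0, ∃ r₂ ∈ sePlus 1, ∃ r₃ ∈ sePlus 2, ∃ e₄ ∈ seAny 3, ∃ e₅ ∈ seAny 4,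
      q = r₁ * r₂ * r₃ * e₄ * e₅} ∪
  {q | ∃ r₁ ∈ seMinus 0, ∃ r₂ ∈ seMinus 1, ∃ r₃ ∈ seMinus 2, ∃ e₄ ∈ seAny 3, ∃ e₅ ∈ seAny 4,
      q = r₁ * r₂ * r₃ * e₄ * e₅} ∪
  {q | ∃ e₁ ∈ seAny 0, ∃ e₂ ∈ seAny 1, ∃ r₃ ∈ sePlus 2, ∃ r₄ ∈ sePlus 3, ∃ r₅ ∈ sePlus 4,
      q = e₁ * e₂ * r₃ * r₄ * r₅} ∪
  {q | ∃ e₁ ∈ seAny 0, ∃ e₂ ∈ seAny 1, ∃ r₃ ∈ seMinus 2, ∃ r₄ ∈ seMinus 3, ∃ r₅ ∈ seMinus 4,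
      q = e₁ * e₂ * r₃ * r₄ * r₅}

/-!
By the definition of the propagators, the `+` part of each leg depends only on the mark of one of
its ends and the `-` part only on the mark of the other. Hence, once a polarity is chosen for every
leg, the signed sum over markings factors over the vertices, and a vertex on whose mark no leg
depends contributes the factor `1 - 1 = 0` (the algebraic form of the largest time equation).
Direct each leg away from the end on which its part of the chosen polarity depends. In the surviving
terms every vertex then has an outgoing leg, so there is a directed cycle. The leg `3` is a chord of
the outer loop `1245`, so if that loop is directed, one of the loops `123` and `345` is as well;
a directed loop `123` or `345` is one whose three polarities agree.
-/

theorem sum_pi_fin_succ {ι A : Type*} [Fintype ι] [AddCommMonoid A] {n : ℕ}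
    (F : (Fin (n + 1) → ι) → A) :
    ∑ M, F M = ∑ b, ∑ M : Fin n → ι, F (Matrix.vecCons b M) := by
  rw [← (Fin.consEquiv fun _ ↦ ι).sum_comp, Fintype.sum_prod_type]
  rfl

section Marking

variable {V E K ι k A : Type*} [Fintype V] [DecidableEq V] [Fintype E] [Fintype ι]
  [CommSemiring k] [CommSemiring A] [Algebra k A]

theorem sum_smul_prod_eq_prod_sum (w : V → ι → k) (x : E → ι → A) (g : E → V) :
    ∑ M : V → ι, (∏ v, w v (M v)) • ∏ e, x e (M (g e)) =
      ∏ v, ∑ b, w v b • ∏ e with g e = v, x e b := by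
  rw [Fintype.prod_sum]
  refine Finset.sum_congr rfl fun M _ ↦ ?_
  rw [Finset.prod_smul, ← Finset.prod_fiberwise Finset.univ g]
  congr! 3 with v _ e he
  rw [(Finset.mem_filter.1 he).2]

theorem sum_smul_prod_eq_zero_of_notMem_range (w : V → ι → k) (x : E → ι → A) {g : E → V} {v : V}
    (hv : v ∉ Set.range g) (hw : ∑ b, w v b = 0) :
    ∑ M : V → ι, (∏ v, w v (M v)) • ∏ e, x e (M (g e)) = 0 := by
  have fiber_empty : Finset.univ.filter (g · = v) = ∅ :=
    Finset.filter_eq_empty_iff.2 fun e _ he ↦ hv ⟨e, he⟩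
  rw [sum_smul_prod_eq_prod_sum]
  refine Finset.prod_eq_zero (Finset.mem_univ v) ?_
  simp only [fiber_empty, Finset.prod_empty, ← Finset.sum_smul, hw, zero_smul]

theorem sum_smul_prod_sum_mem [Fintype K] (w : V → ι → k) (hw : ∀ v, ∑ b, w v b = 0)
    (x : E → K → ι → A) (f : E → K → V) (S : Submodule k A)
    (hS : ∀ ε : E → K, Function.Surjective (fun e ↦ f e (ε e)) →
      ∀ M : V → ι, ∏ e, x e (ε e) (M (f e (ε e))) ∈ S) :
    ∑ M : V → ι, (∏ v, w v (M v)) • ∏ e, ∑ p, x e p (M (f e p)) ∈ S := by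
  classical
  simp only [Fintype.prod_sum, Finset.smul_sum]
  rw [Finset.sum_comm]
  refine S.sum_mem fun ε _ ↦ ?_
  by_cases hε : Function.Surjective fun e ↦ f e (ε e)
  · exact S.sum_mem fun M _ ↦ S.smul_mem _ (hS ε hε M)
  · obtain ⟨v, hv⟩ := not_forall.1 hε
    rw [sum_smul_prod_eq_zero_of_notMem_range w (fun e ↦ x e (ε e)) hv (hw v)]
    exact S.zero_mem

end Marking

/-- The superscript `±` of a polar variable. -/
inductive Polarity
  | plus
  | minus
  deriving DecidableEq

instance : Fintype Polarity where
  elems := {.plus, .minus}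
  complete p := by cases p <;> decide

/-- The sign with which the mark of a vertex enters the cutting equation; `true` means marked. -/
def markSign : Bool → ℤ
  | false => 1
  | true => -1

/-- The end of leg `i` on whose mark the part of the propagator of polarity `p` depends. The
vertices `0, 1, 2, 3` are those whose marking alone gives the terms `u₁v₂z₃z₄z₅`, `z₁u₂v₃z₄u₅`,
`z₁z₂z₃u₄v₅` and `v₁z₂u₃v₄z₅`. -/
def selfEnergyEnd (i : Fin 5) : Polarity → Fin 4
  | .plus => ![3, 0, 1, 3, 2] i
  | .minus => ![0, 1, 3, 2, 1] i

/-- The polar variable of leg `i` of given polarity: `σ` if the end it depends on is unmarked and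
`τ` if it is marked. -/
noncomputable def polarVar (i : Fin 5) : Polarity → Bool → MvPolynomial (Fin 5 × Fin 4) ℤ
  | .plus, false => seSp i
  | .plus, true => seTp i
  | .minus, false => seSm i
  | .minus, true => seTm i

/-- The propagator of leg `i` in terms of the marks of its `+` end and its `-` end. -/
noncomputable def propagator (i : Fin 5) : Bool → Bool → MvPolynomial (Fin 5 × Fin 4) ℤ
  | false, false => seZ i
  | false, true => seU i
  | true, false => seV i
  | true, true => seW i

theorem sum_markSign : ∑ b, markSign b = 0 := rfl

theorem sum_polarVar (i : Fin 5) (m : Polarity → Bool) :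
    ∑ p, polarVar i p (m p) = propagator i (m .plus) (m .minus) := by
  have sum_polarity : ∑ p, polarVar i p (m p) =
      polarVar i .plus (m .plus) + polarVar i .minus (m .minus) :=
    Finset.sum_pair Polarity.noConfusion
  rw [sum_polarity]
  cases m .plus <;> cases m .minus
  · rfl
  · rfl
  · exact add_comm _ _
  · rfl

theorem polarVar_plus_mem (i : Fin 5) (b : Bool) : polarVar i .plus b ∈ sePlus i := by
  cases b <;> simp [polarVar, sePlus]

theorem polarVar_minus_mem (i : Fin 5) (b : Bool) : polarVar i .minus b ∈ seMinus i := by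
  cases b <;> simp [polarVar, seMinus]

theorem polarVar_mem_seAny (i : Fin 5) (p : Polarity) (b : Bool) : polarVar i p b ∈ seAny i := by
  cases p <;> cases b <;> simp [polarVar, seAny]

theorem prod_polarVar_mem_of_left_loop {ε : Fin 5 → Polarity} (h₁ : ε 0 = ε 2) (h₂ : ε 1 = ε 2)
    (m : Fin 5 → Bool) : ∏ i, polarVar i (ε i) (m i) ∈ selfEnergyPolarized := by
  rw [Fin.prod_univ_five, h₁, h₂]
  cases ε 2
  · exact .inl <| .inl <| .inl ⟨_, polarVar_plus_mem _ _, _, polarVar_plus_mem _ _,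
      _, polarVar_plus_mem _ _, _, polarVar_mem_seAny _ _ _, _, polarVar_mem_seAny _ _ _, rfl⟩
  · exact .inl <| .inl <| .inr ⟨_, polarVar_minus_mem _ _, _, polarVar_minus_mem _ _,
      _, polarVar_minus_mem _ _, _, polarVar_mem_seAny _ _ _, _, polarVar_mem_seAny _ _ _, rfl⟩

theorem prod_polarVar_mem_of_right_loop {ε : Fin 5 → Polarity} (h₄ : ε 3 = ε 2) (h₅ : ε 4 = ε 2)
    (m : Fin 5 → Bool) : ∏ i, polarVar i (ε i) (m i) ∈ selfEnergyPolarized := by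
  rw [Fin.prod_univ_five, h₄, h₅]
  cases ε 2
  · exact .inl <| .inr ⟨_, polarVar_mem_seAny _ _ _, _, polarVar_mem_seAny _ _ _,
      _, polarVar_plus_mem _ _, _, polarVar_plus_mem _ _, _, polarVar_plus_mem _ _, rfl⟩
  · exact .inr ⟨_, polarVar_mem_seAny _ _ _, _, polarVar_mem_seAny _ _ _,
      _, polarVar_minus_mem _ _, _, polarVar_minus_mem _ _, _, polarVar_minus_mem _ _, rfl⟩

theorem loop_coherent_of_surjective_selfEnergyEnd (ε : Fin 5 → Polarity)
    (hε : Function.Surjective fun i ↦ selfEnergyEnd i (ε i)) :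
    (ε 0 = ε 2 ∧ ε 1 = ε 2) ∨ (ε 3 = ε 2 ∧ ε 4 = ε 2) := by
  have vertex_zero : ε 0 = .minus ∨ ε 1 = .plus := by decide +revert
  have vertex_one : ε 1 = .minus ∨ ε 2 = .plus ∨ ε 4 = .minus := by decide +revert
  have vertex_two : ε 3 = .minus ∨ ε 4 = .plus := by decide +revert
  have vertex_three : ε 0 = .plus ∨ ε 2 = .minus ∨ ε 3 = .plus := by decide +revert
  -- From `ε 2 = .plus` go on through vertex 3, then through vertex 0 or vertex 2; from
  -- `ε 2 = .minus` through vertex 1, then through the same two vertices.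
  cases leg_two : ε 2 <;> grind

theorem prod_polarVar_mem_of_surjective_selfEnergyEnd {ε : Fin 5 → Polarity}
    (hε : Function.Surjective fun i ↦ selfEnergyEnd i (ε i)) (m : Fin 5 → Bool) :
    ∏ i, polarVar i (ε i) (m i) ∈ selfEnergyPolarized := by
  rcases loop_coherent_of_surjective_selfEnergyEnd ε hε with ⟨h₁, h₂⟩ | ⟨h₄, h₅⟩
  · exact prod_polarVar_mem_of_left_loop h₁ h₂ m
  · exact prod_polarVar_mem_of_right_loop h₄ h₅ m

theorem sum_markSign_smul_prod_propagator_mem :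
    ∑ M : Fin 4 → Bool, (∏ v, markSign (M v)) •
        ∏ i, propagator i (M (selfEnergyEnd i .plus)) (M (selfEnergyEnd i .minus)) ∈
      Submodule.span ℤ selfEnergyPolarized := by
  simpa only [sum_polarVar] using
    sum_smul_prod_sum_mem (fun _ ↦ markSign) (fun _ ↦ sum_markSign) polarVar selfEnergyEnd _
      fun ε hε M ↦ Submodule.subset_span (prod_polarVar_mem_of_surjective_selfEnergyEnd hε _)

theorem selfEnergy_cutting_equation :
    seZ 0 * seZ 1 * seZ 2 * seZ 3 * seZ 4 + seW 0 * seW 1 * seW 2 * seW 3 * seW 4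
      - seU 0 * seV 1 * seZ 2 * seZ 3 * seZ 4 - seZ 0 * seU 1 * seV 2 * seZ 3 * seU 4
      - seZ 0 * seZ 1 * seZ 2 * seU 3 * seV 4 - seV 0 * seZ 1 * seU 2 * seV 3 * seZ 4
      + seU 0 * seW 1 * seV 2 * seZ 3 * seU 4 + seU 0 * seV 1 * seZ 2 * seU 3 * seV 4
      + seW 0 * seV 1 * seU 2 * seV 3 * seZ 4 + seV 0 * seU 1 * seW 2 * seV 3 * seU 4
      + seZ 0 * seU 1 * seV 2 * seU 3 * seW 4 + seV 0 * seZ 1 * seU 2 * seW 3 * seV 4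
      - seV 0 * seU 1 * seW 2 * seW 3 * seW 4 - seW 0 * seV 1 * seU 2 * seW 3 * seV 4
      - seW 0 * seW 1 * seW 2 * seV 3 * seU 4 - seU 0 * seW 1 * seV 2 * seU 3 * seW 4
    ∈ Submodule.span ℤ selfEnergyPolarized := by
  convert sum_markSign_smul_prod_propagator_mem using 1
  simp only [sum_pi_fin_succ, Fintype.sum_bool, Fintype.sum_unique, Fin.prod_univ_four,
    Fin.prod_univ_five, selfEnergyEnd, Matrix.cons_val, markSign, propagator]
  ring
end

section
/- Let n ≥ 2 be a natural number, c : Fin n → ℝ, and θ : Fin n → ℂ. Assume that either Im(θ i) > 0 for all i, or Im(θ i) < 0 for all i. Then the function e ↦ ∏_{i} 1/(e + c i − θ i) is (Bochner) integrable on ℝ and ∫_{ℝ} ∏_{i} 1/(e + c i − θ i) de = 0. -/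
open MeasureTheory Complex

open Asymptotics Bornology ComplexConjugate Filter Finset Topology

/-!
All the poles lie in one open half-plane; after complex conjugation it is the lower one, and the
integrand is holomorphic on the closed upper half-plane. The integral over `[-R, R]` is then, by
Cauchy's theorem for the rectangle `[-R, R] × [0, R]`, a combination of the integrals over the other
three sides. Their total length is `4 * R`, and on them the integrand is `O(R⁻²)` because it has at
least two factors.
-/

section UpperHalfPlane

variable {E : Type*} [NormedAddCommGroup E] [NormedSpace ℂ E] {f : ℂ → E}

lemma integral_neg_self_eq_of_diffContOnCl_upperHalfPlane
    (hf : DiffContOnCl ℂ f {z | 0 < z.im}) {R : ℝ} (hR : 0 ≤ R) :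
    ∫ x in -R..R, f x = (∫ x in -R..R, f (x + R * I)) - I • (∫ y in 0..R, f (R + y * I))
      + I • ∫ y in 0..R, f (-R + y * I) := by
  have hcont : ContinuousOn f {z | 0 ≤ z.im} := by
    simpa only [closure_setOfPred_lt_im] using hf.continuousOn
  have hrect := integral_boundary_rect_eq_zero_of_continuousOn_of_differentiableOn f
    (⟨-R, 0⟩ : ℂ) (⟨R, R⟩ : ℂ)
    (hcont.mono fun z hz => by
      have him : z.im ∈ Set.uIcc 0 R := hz.2
      exact (Set.uIcc_of_le hR ▸ him).1)
    (hf.differentiableOn.mono fun z hz => by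
      have him : z.im ∈ Set.Ioo (min 0 R) (max 0 R) := hz.2
      exact (min_eq_left hR ▸ him.1 : 0 < z.im))
  simp only [ofReal_zero, zero_mul, add_zero, ofReal_neg] at hrect
  rw [← sub_eq_zero, ← hrect]
  abel

lemma norm_integral_neg_self_le_of_diffContOnCl_upperHalfPlane
    (hf : DiffContOnCl ℂ f {z | 0 < z.im}) {R M : ℝ} (hR : 0 ≤ R)
    (hM : ∀ z : ℂ, 0 ≤ z.im → R ≤ ‖z‖ → ‖f z‖ ≤ M) :
    ‖∫ x in -R..R, f x‖ ≤ 4 * R * M := by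
  have htop : ‖∫ x in -R..R, f (x + R * I)‖ ≤ M * |R - -R| := by
    refine intervalIntegral.norm_integral_le_of_norm_le_const fun x _ => hM _ (by simpa) ?_
    simpa [abs_of_nonneg hR] using abs_im_le_norm (x + R * I)
  have hside : ∀ u : ℝ, |u| = R → ‖∫ y in 0..R, f (u + y * I)‖ ≤ M * |R - 0| := by
    refine fun u hu => intervalIntegral.norm_integral_le_of_norm_le_const fun y hy => ?_
    rw [Set.uIoc_of_le hR] at hy
    refine hM _ (by simpa using hy.1.le) ?_
    simpa [hu] using abs_re_le_norm (u + y * I)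
  have hright := hside R (abs_of_nonneg hR)
  have hleft := hside (-R) (by rw [abs_neg, abs_of_nonneg hR])
  rw [ofReal_neg] at hleft
  rw [sub_neg_eq_add, abs_of_nonneg (add_nonneg hR hR)] at htop
  rw [sub_zero, abs_of_nonneg hR] at hright hleft
  rw [integral_neg_self_eq_of_diffContOnCl_upperHalfPlane hf hR]
  calc _ ≤ ‖∫ x in -R..R, f (x + R * I)‖ + ‖I • ∫ y in 0..R, f (R + y * I)‖
        + ‖I • ∫ y in 0..R, f (-R + y * I)‖ :=
        (norm_add_le _ _).trans (add_le_add_left (norm_sub_le _ _) _)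
    _ ≤ M * (R + R) + M * R + M * R := by
        simp only [norm_smul, norm_I, one_mul]
        gcongr
    _ = 4 * R * M := by ring

lemma tendsto_integral_neg_self_of_diffContOnCl_upperHalfPlane
    (hf : DiffContOnCl ℂ f {z | 0 < z.im})
    (hdecay : f =o[cobounded ℂ ⊓ 𝓟 {z | 0 ≤ z.im}] fun z => z⁻¹) :
    Tendsto (fun R : ℝ => ∫ x in -R..R, f x) atTop (𝓝 0) := by
  rw [Metric.tendsto_nhds]
  intro ε hε
  have hbound : ∀ᶠ z in cobounded ℂ, 0 ≤ z.im → ‖f z‖ ≤ ε / 8 * ‖z⁻¹‖ :=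
    eventually_inf_principal.mp (hdecay.def (by positivity))
  rw [← comap_norm_atTop, eventually_comap, eventually_atTop] at hbound
  obtain ⟨r, hr⟩ := hbound
  filter_upwards [eventually_ge_atTop r, eventually_gt_atTop 0] with R hrR hR
  have hM : ∀ z : ℂ, 0 ≤ z.im → R ≤ ‖z‖ → ‖f z‖ ≤ ε / 8 * R⁻¹ := fun z hz hRz => by
    refine (hr ‖z‖ (hrR.trans hRz) z rfl hz).trans ?_
    rw [norm_inv]
    gcongr
  rw [dist_zero_right]
  calc _ ≤ 4 * R * (ε / 8 * R⁻¹) :=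
        norm_integral_neg_self_le_of_diffContOnCl_upperHalfPlane hf hR.le hM
    _ = ε / 2 := by field_simp; norm_num
    _ < ε := half_lt_self hε

theorem integral_real_eq_zero_of_diffContOnCl_upperHalfPlane
    (hf : DiffContOnCl ℂ f {z | 0 < z.im})
    (hdecay : f =o[cobounded ℂ ⊓ 𝓟 {z | 0 ≤ z.im}] fun z => z⁻¹)
    (hint : Integrable fun x : ℝ => f x) :
    ∫ x : ℝ, f x = 0 :=
  tendsto_nhds_unique
    (intervalIntegral_tendsto_integral hint tendsto_neg_atTop_atBot tendsto_id)
    (tendsto_integral_neg_self_of_diffContOnCl_upperHalfPlane hf hdecay)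

end UpperHalfPlane

lemma integrable_of_isBigO_cobounded_inv_pow {E : Type*} [NormedAddCommGroup E] {f : ℝ → E}
    {k : ℕ} (hk : 2 ≤ k) (hf : LocallyIntegrable f)
    (hdecay : f =O[cobounded ℝ] fun x => (x ^ k)⁻¹) : Integrable f := by
  have hpow : (fun x : ℝ => 1 + x ^ 2) =O[cobounded ℝ] fun x => x ^ k := by
    refine IsBigO.add ?_ (isBigO_pow_pow_cobounded_of_le hk)
    simpa only [pow_zero] using isBigO_pow_pow_cobounded_of_le (R := ℝ) (Nat.zero_le k)
  have hinv : (fun x : ℝ => (x ^ k)⁻¹) =O[cobounded ℝ] fun x => (1 + x ^ 2)⁻¹ :=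
    hpow.inv_rev (.of_forall fun x hx => absurd hx (by positivity))
  rw [Metric.cobounded_eq_cocompact] at hdecay hinv
  exact hf.integrable_of_isBigO_cocompact (hdecay.trans hinv)
    (integrable_inv_one_add_sq.integrableAtFilter _)

section InvProd

variable {ι : Type*} {s : Finset ι}

lemma isEquivalent_prod_inv_sub_cobounded {𝕜 : Type*} [NormedField 𝕜] (s : Finset ι)
    (a : ι → 𝕜) :
    (fun z => ∏ i ∈ s, (z - a i)⁻¹) ~[cobounded 𝕜] fun z => (z ^ #s)⁻¹ := by
  have hfactor : ∀ i, (fun z => z - a i) ~[cobounded 𝕜] id := fun i =>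
    IsEquivalent.refl.sub_isLittleO (isLittleO_const_id_cobounded (a i))
  simpa using IsEquivalent.finsetProd (s := s) fun i _ => (hfactor i).inv

lemma isLittleO_prod_inv_sub_cobounded {𝕜 : Type*} [NormedField 𝕜] (hs : 2 ≤ #s) (a : ι → 𝕜) :
    (fun z => ∏ i ∈ s, (z - a i)⁻¹) =o[cobounded 𝕜] fun z => z⁻¹ := by
  have hpow : (fun z : 𝕜 => (z ^ #s)⁻¹) =o[cobounded 𝕜] fun z => (z ^ 1)⁻¹ :=
    (isLittleO_pow_pow_cobounded_of_lt hs).inv_rev <|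
      (eventually_ne_cobounded 0).mono fun z hz h => absurd h (pow_ne_zero 1 hz)
  simpa only [pow_one] using (isEquivalent_prod_inv_sub_cobounded s a).isBigO.trans_isLittleO hpow

variable {a : ι → ℂ}

lemma integrable_prod_inv_sub (hs : 2 ≤ #s) (ha : ∀ i ∈ s, (a i).im ≠ 0) :
    Integrable fun x : ℝ => ∏ i ∈ s, ((x : ℂ) - a i)⁻¹ := by
  have hne : ∀ i ∈ s, ∀ x : ℝ, (x : ℂ) - a i ≠ 0 := fun i hi x h =>
    ha i hi (by simpa using congrArg im h)
  have hcont : Continuous fun x : ℝ => ∏ i ∈ s, ((x : ℂ) - a i)⁻¹ :=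
    continuous_finsetProd s fun i hi => (by fun_prop : Continuous _).inv₀ (hne i hi)
  refine integrable_of_isBigO_cobounded_inv_pow hs hcont.locallyIntegrable ?_
  refine ((isEquivalent_prod_inv_sub_cobounded s a).isBigO.comp_tendsto
    (RCLike.tendsto_ofReal_cobounded_cobounded ℂ)).trans (.of_bound' ?_)
  exact .of_forall fun x => by simp

lemma diffContOnCl_prod_inv_sub (ha : ∀ i ∈ s, (a i).im < 0) :
    DiffContOnCl ℂ (fun z => ∏ i ∈ s, (z - a i)⁻¹) {z | 0 < z.im} := by
  refine DifferentiableOn.diffContOnCl fun z hz => DifferentiableAt.differentiableWithinAt ?_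
  rw [closure_setOfPred_lt_im] at hz
  refine DifferentiableAt.fun_finsetProd fun i hi => DifferentiableAt.inv (by fun_prop) ?_
  exact sub_ne_zero.mpr fun h => (ha i hi).not_ge (h ▸ hz)

lemma integral_prod_inv_sub_eq_zero_of_im_neg (hs : 2 ≤ #s) (ha : ∀ i ∈ s, (a i).im < 0) :
    ∫ x : ℝ, ∏ i ∈ s, ((x : ℂ) - a i)⁻¹ = 0 :=
  integral_real_eq_zero_of_diffContOnCl_upperHalfPlane (diffContOnCl_prod_inv_sub ha)
    ((isLittleO_prod_inv_sub_cobounded hs a).mono inf_le_left)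
    (integrable_prod_inv_sub hs fun i hi => (ha i hi).ne)

lemma integral_prod_inv_sub_eq_zero_of_im_pos (hs : 2 ≤ #s) (ha : ∀ i ∈ s, 0 < (a i).im) :
    ∫ x : ℝ, ∏ i ∈ s, ((x : ℂ) - a i)⁻¹ = 0 := by
  have hconj : ∫ x : ℝ, ∏ i ∈ s, ((x : ℂ) - conj (a i))⁻¹ = 0 :=
    integral_prod_inv_sub_eq_zero_of_im_neg hs fun i hi => by simpa using ha i hi
  calc ∫ x : ℝ, ∏ i ∈ s, ((x : ℂ) - a i)⁻¹
      = ∫ x : ℝ, conj (∏ i ∈ s, ((x : ℂ) - conj (a i))⁻¹) := by simp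
    _ = 0 := by rw [integral_conj, hconj, map_zero]

theorem polarizedOrientedLoop_integral_eq_zero_general (hs : 2 ≤ #s)
    (ha : (∀ i ∈ s, 0 < (a i).im) ∨ (∀ i ∈ s, (a i).im < 0)) :
    Integrable (fun x : ℝ => ∏ i ∈ s, ((x : ℂ) - a i)⁻¹) ∧
    ∫ x : ℝ, ∏ i ∈ s, ((x : ℂ) - a i)⁻¹ = 0 := by
  rcases ha with hpos | hneg
  · exact ⟨integrable_prod_inv_sub hs fun i hi => (hpos i hi).ne',
      integral_prod_inv_sub_eq_zero_of_im_pos hs hpos⟩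
  · exact ⟨integrable_prod_inv_sub hs fun i hi => (hneg i hi).ne,
      integral_prod_inv_sub_eq_zero_of_im_neg hs hneg⟩

end InvProd

theorem polarizedOrientedLoop_integral_eq_zero (n : ℕ) (hn : 2 ≤ n)
    (c : Fin n → ℝ) (θ : Fin n → ℂ)
    (hθ : (∀ i, 0 < (θ i).im) ∨ (∀ i, (θ i).im < 0)) :
    Integrable (fun e : ℝ => ∏ i : Fin n, ((e : ℂ) + (c i : ℂ) - θ i)⁻¹) ∧
    ∫ e : ℝ, ∏ i : Fin n, ((e : ℂ) + (c i : ℂ) - θ i)⁻¹ = 0 := by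
  simpa [sub_sub_eq_add_sub] using polarizedOrientedLoop_integral_eq_zero_general
    (s := univ) (a := fun i => θ i - c i) (by simpa using hn) (by simpa using hθ)
end

section
/- Let n ≥ 2 be a natural number, c : Fin n → ℝ, ε : Fin n → ℝ with ε i = 1 or ε i = −1 for each i, and θ : Fin n → ℂ. Assume that either ε i · Im(θ i) > 0 for all i, or ε i · Im(θ i) < 0 for all i. Then the function e ↦ ∏_{i} 1/(ε i · e + c i − θ i) is (Bochner) integrable on ℝ and ∫_{ℝ} ∏_{i} 1/(ε i · e + c i − θ i) de = 0. -/
/-!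
The pole `(θ - c) / ε` of a factor lies on the side of the real axis given by the sign of
`ε * im θ`. When all poles lie below the axis, close the contour in the upper half-plane: the
integrand is holomorphic there and, having at least two factors, is `o(1 / |z|)`. By Cauchy's
theorem the integral over `[-R, R]` is determined by the other three sides of the rectangle
`[-R, R] × [0, R]`, whose contribution tends to `0`. Complex conjugation exchanges the two sides.
-/

open MeasureTheory Complex

open Asymptotics Bornology Filter Set Topology

section UpperHalfPlane

variable {E : Type*} [NormedAddCommGroup E] [NormedSpace ℂ E] {f : ℂ → E}

lemma intervalIntegral_eq_of_diffContOnCl_upperHalfPlane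
    (hf : DiffContOnCl ℂ f {z | 0 < z.im}) (a b : ℝ) {h : ℝ} (hh : 0 ≤ h) :
    ∫ x : ℝ in a..b, f x =
      (∫ x : ℝ in a..b, f (x + h * I)) - I • (∫ y : ℝ in 0..h, f (b + y * I)) +
        I • ∫ y : ℝ in 0..h, f (a + y * I) := by
  have hcont : ContinuousOn f (uIcc a b ×ℂ uIcc 0 h) := by
    refine hf.continuousOn.mono fun z hz ↦ ?_
    rw [closure_setOfPred_lt_im]
    exact (uIcc_of_le hh ▸ hz.2 : z.im ∈ Icc 0 h).1
  have hdiff : DifferentiableOn ℂ f (Ioo (min a b) (max a b) ×ℂ Ioo (min 0 h) (max 0 h)) :=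
    hf.differentiableOn.mono fun z hz ↦ (min_eq_left hh ▸ hz.2.1 : 0 < z.im)
  have cauchy := integral_boundary_rect_eq_zero_of_continuousOn_of_differentiableOn
    f ⟨a, 0⟩ ⟨b, h⟩ hcont hdiff
  simp only [ofReal_zero, zero_mul, add_zero] at cauchy
  rw [← sub_eq_zero, ← cauchy]
  abel

lemma norm_intervalIntegral_le_of_diffContOnCl_upperHalfPlane
    (hf : DiffContOnCl ℂ f {z | 0 < z.im}) {R M : ℝ} (hR : 0 ≤ R)
    (hM : ∀ z : ℂ, 0 ≤ z.im → R ≤ ‖z‖ → ‖f z‖ ≤ M) :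
    ‖∫ x : ℝ in -R..R, f x‖ ≤ 4 * R * M := by
  have norm_top_le : ‖∫ x : ℝ in -R..R, f (x + R * I)‖ ≤ M * |R - -R| := by
    refine intervalIntegral.norm_integral_le_of_norm_le_const fun x _ ↦ hM _ (by simpa) ?_
    simpa [abs_of_nonneg hR] using abs_im_le_norm (x + R * I)
  have norm_side_le (a : ℝ) (ha : |a| = R) :
      ‖I • ∫ y : ℝ in 0..R, f (a + y * I)‖ ≤ M * |R - 0| := by
    rw [norm_smul, norm_I, one_mul]
    refine intervalIntegral.norm_integral_le_of_norm_le_const fun y hy ↦ hM _ ?_ ?_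
    · simpa using (uIoc_of_le hR ▸ hy : y ∈ Ioc 0 R).1.le
    · simpa [ha] using abs_re_le_norm (a + y * I)
  have abs_width : |R - -R| = 2 * R := by rw [abs_of_nonneg (by linarith)]; ring
  have abs_height : |R - 0| = R := by rw [sub_zero, abs_of_nonneg hR]
  rw [abs_width] at norm_top_le
  rw [abs_height] at norm_side_le
  rw [intervalIntegral_eq_of_diffContOnCl_upperHalfPlane hf (-R) R hR]
  calc _ ≤ M * (2 * R) + M * R + M * R :=
        norm_add_le_of_le
          (norm_sub_le_of_le norm_top_le (norm_side_le R (abs_of_nonneg hR)))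
          (norm_side_le (-R) (by rw [abs_neg, abs_of_nonneg hR]))
    _ = 4 * R * M := by ring

lemma tendsto_intervalIntegral_of_isLittleO_inv_upperHalfPlane
    (hf : DiffContOnCl ℂ f {z | 0 < z.im})
    (hdecay : f =o[cobounded ℂ ⊓ 𝓟 {z | 0 ≤ z.im}] fun z ↦ z⁻¹) :
    Tendsto (fun R : ℝ ↦ ∫ x : ℝ in -R..R, f x) atTop (𝓝 0) := by
  refine (NormedAddGroup.tendsto_nhds_zero).2 fun η hη ↦ ?_
  have hbound : ∀ᶠ z in cobounded ℂ, 0 ≤ z.im → ‖f z‖ ≤ η / 8 * ‖z⁻¹‖ :=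
    eventually_inf_principal.1 (hdecay.bound (by positivity))
  obtain ⟨R₀, -, hR₀⟩ := (hasBasis_cobounded_norm (E := ℂ)).eventually_iff.1 hbound
  filter_upwards [eventually_gt_atTop 0, eventually_ge_atTop R₀] with R hR hR₀R
  have hM (z : ℂ) (hz : 0 ≤ z.im) (hRz : R ≤ ‖z‖) : ‖f z‖ ≤ η / 8 * R⁻¹ := by
    refine (hR₀ (hR₀R.trans hRz) hz).trans ?_
    rw [norm_inv]
    gcongr
  calc ‖∫ x : ℝ in -R..R, f x‖ ≤ 4 * R * (η / 8 * R⁻¹) :=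
        norm_intervalIntegral_le_of_diffContOnCl_upperHalfPlane hf hR.le hM
    _ = η / 2 := by field_simp; norm_num
    _ < η := half_lt_self hη

lemma integral_eq_zero_of_isLittleO_inv_upperHalfPlane
    (hf : DiffContOnCl ℂ f {z | 0 < z.im})
    (hdecay : f =o[cobounded ℂ ⊓ 𝓟 {z | 0 ≤ z.im}] fun z ↦ z⁻¹)
    (hint : Integrable fun x : ℝ ↦ f x) : ∫ x : ℝ, f x = 0 :=
  tendsto_nhds_unique
    (intervalIntegral_tendsto_integral hint tendsto_neg_atTop_atBot tendsto_id)
    (tendsto_intervalIntegral_of_isLittleO_inv_upperHalfPlane hf hdecay)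

end UpperHalfPlane

section ProdInvSub

variable {ι : Type*} {s : Finset ι}

lemma isBigO_inv_sub_cobounded {𝕜 : Type*} [NormedField 𝕜] (p : 𝕜) :
    (fun z ↦ (z - p)⁻¹) =O[cobounded 𝕜] fun z ↦ z⁻¹ := by
  have hequiv : (fun z ↦ z - p) ~[cobounded 𝕜] id :=
    IsEquivalent.refl.sub_isLittleO (isLittleO_const_id_cobounded p)
  exact hequiv.inv.isBigO

lemma isBigO_prod_inv_sub_cobounded {𝕜 : Type*} [NormedField 𝕜] {m : ℕ} (hm : m ≤ s.card)
    (p : ι → 𝕜) : (fun z ↦ ∏ i ∈ s, (z - p i)⁻¹) =O[cobounded 𝕜] fun z ↦ (z ^ m)⁻¹ := by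
  have hcard : (fun z ↦ ∏ i ∈ s, (z - p i)⁻¹) =O[cobounded 𝕜] fun z ↦ (z ^ s.card)⁻¹ := by
    simpa only [Finset.prod_const, inv_pow] using
      IsBigO.finsetProd (s := s) fun i _ ↦ isBigO_inv_sub_cobounded (p i)
  refine hcard.trans ((isBigO_pow_pow_cobounded_of_le hm).inv_rev ?_)
  filter_upwards [eventually_ne_cobounded 0] with z hz hzm
  exact absurd hzm (pow_ne_zero m hz)

lemma isBigO_inv_sq_inv_one_add_sq_cobounded :
    (fun x : ℝ ↦ (x ^ 2)⁻¹) =O[cobounded ℝ] fun x ↦ (1 + x ^ 2)⁻¹ := by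
  have hone : (fun _ : ℝ ↦ (1 : ℝ)) =O[cobounded ℝ] fun x ↦ x ^ 2 := by
    simpa only [pow_zero] using isBigO_pow_pow_cobounded_of_le (R := ℝ) (Nat.zero_le 2)
  exact (hone.add (isBigO_refl _ _)).inv_rev <| .of_forall fun x hx ↦
    absurd hx (by positivity)

lemma integrable_prod_inv_ofReal_sub (hs : 2 ≤ s.card) {p : ι → ℂ}
    (hp : ∀ i ∈ s, (p i).im ≠ 0) : Integrable fun x : ℝ ↦ ∏ i ∈ s, ((x : ℂ) - p i)⁻¹ := by
  have hcont : Continuous fun x : ℝ ↦ ∏ i ∈ s, ((x : ℂ) - p i)⁻¹ := by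
    refine continuous_finsetProd s fun i hi ↦ ?_
    refine Continuous.inv₀ (by fun_prop) fun x hx ↦ hp i hi ?_
    rw [← sub_eq_zero.1 hx, ofReal_im]
  have hdecay : (fun x : ℝ ↦ ∏ i ∈ s, ((x : ℂ) - p i)⁻¹) =O[cobounded ℝ] fun x ↦ (x ^ 2)⁻¹ := by
    refine ((isBigO_prod_inv_sub_cobounded hs p).comp_tendsto
      (RCLike.tendsto_ofReal_cobounded_cobounded ℂ)).trans (.of_norm_le fun x ↦ ?_)
    simp
  refine hcont.locallyIntegrable.integrable_of_isBigO_cocompact ?_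
    (integrable_inv_one_add_sq.integrableAtFilter _)
  rw [← Metric.cobounded_eq_cocompact]
  exact hdecay.trans isBigO_inv_sq_inv_one_add_sq_cobounded

lemma integral_prod_inv_ofReal_sub_eq_zero_of_im_neg (hs : 2 ≤ s.card) {p : ι → ℂ}
    (hp : ∀ i ∈ s, (p i).im < 0) : ∫ x : ℝ, ∏ i ∈ s, ((x : ℂ) - p i)⁻¹ = 0 := by
  have hdiff : DifferentiableOn ℂ (fun z ↦ ∏ i ∈ s, (z - p i)⁻¹) {z | 0 ≤ z.im} := by
    refine DifferentiableOn.fun_finsetProd fun i hi ↦ ?_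
    refine (differentiableOn_id.sub_const (p i)).inv fun z hz hzp ↦ (hp i hi).not_ge ?_
    rw [← sub_eq_zero.1 hzp]
    exact hz
  have hdecay : (fun z ↦ ∏ i ∈ s, (z - p i)⁻¹) =o[cobounded ℂ] fun z ↦ z⁻¹ := by
    refine (isBigO_prod_inv_sub_cobounded hs p).trans_isLittleO ?_
    simpa [Function.comp_def] using
      (isLittleO_pow_pow one_lt_two).comp_tendsto (tendsto_inv₀_cobounded (α := ℂ))
  refine integral_eq_zero_of_isLittleO_inv_upperHalfPlane (f := fun z ↦ ∏ i ∈ s, (z - p i)⁻¹)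
    ?_ (hdecay.mono inf_le_left) (integrable_prod_inv_ofReal_sub hs fun i hi ↦ (hp i hi).ne)
  rw [← closure_setOfPred_lt_im] at hdiff
  exact hdiff.diffContOnCl

lemma integral_prod_inv_ofReal_sub_eq_zero_of_im_pos (hs : 2 ≤ s.card) {p : ι → ℂ}
    (hp : ∀ i ∈ s, 0 < (p i).im) : ∫ x : ℝ, ∏ i ∈ s, ((x : ℂ) - p i)⁻¹ = 0 := by
  have hconj := integral_prod_inv_ofReal_sub_eq_zero_of_im_neg hs
    (p := fun i ↦ starRingEnd ℂ (p i)) fun i hi ↦ by simpa using hp i hi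
  rw [← map_eq_zero (starRingEnd ℂ), ← integral_conj]
  simpa using hconj

end ProdInvSub

lemma prod_inv_mul_add_sub_eq {𝕜 ι : Type*} [Field 𝕜] {s : Finset ι} {a : ι → 𝕜}
    (ha : ∀ i ∈ s, a i ≠ 0) (b d : ι → 𝕜) (z : 𝕜) :
    ∏ i ∈ s, (a i * z + b i - d i)⁻¹ =
      (∏ i ∈ s, (a i)⁻¹) * ∏ i ∈ s, (z - (d i - b i) / a i)⁻¹ := by
  rw [← Finset.prod_mul_distrib]
  refine Finset.prod_congr rfl fun i hi ↦ ?_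
  rw [← mul_inv, mul_sub, mul_div_cancel₀ _ (ha i hi)]
  ring

theorem polarizedLoop_integral_eq_zero_general {ι : Type*} [Fintype ι] (hι : 2 ≤ Fintype.card ι)
    (c ε : ι → ℝ) (θ : ι → ℂ)
    (hθ : (∀ i, 0 < ε i * (θ i).im) ∨ (∀ i, ε i * (θ i).im < 0)) :
    Integrable (fun e : ℝ ↦ ∏ i, ((ε i : ℂ) * (e : ℂ) + (c i : ℂ) - θ i)⁻¹) ∧
    ∫ e : ℝ, ∏ i, ((ε i : ℂ) * (e : ℂ) + (c i : ℂ) - θ i)⁻¹ = 0 := by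
  let pole (i : ι) : ℂ := (θ i - c i) / ε i
  have hne (i : ι) : ε i * (θ i).im ≠ 0 := hθ.elim (fun h ↦ (h i).ne') fun h ↦ (h i).ne
  have hε (i : ι) : ε i ≠ 0 := left_ne_zero_of_mul (hne i)
  have pole_im (i : ι) : (pole i).im = ε i * (θ i).im / ε i ^ 2 := by
    simp only [pole, div_ofReal_im, sub_im, ofReal_im, sub_zero]
    field_simp [hε i]
  simp only [prod_inv_mul_add_sub_eq (fun i _ ↦ ofReal_ne_zero.2 (hε i)), integral_const_mul]
  refine ⟨(integrable_prod_inv_ofReal_sub hι (p := pole) fun i _ ↦ ?_).const_mul _,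
    mul_eq_zero_of_right _ ?_⟩
  · rw [pole_im]
    exact div_ne_zero (hne i) (pow_ne_zero 2 (hε i))
  · rcases hθ with hpos | hneg
    · refine integral_prod_inv_ofReal_sub_eq_zero_of_im_pos hι (p := pole) fun i _ ↦ ?_
      rw [pole_im]
      exact div_pos (hpos i) (sq_pos_of_ne_zero (hε i))
    · refine integral_prod_inv_ofReal_sub_eq_zero_of_im_neg hι (p := pole) fun i _ ↦ ?_
      rw [pole_im]
      exact div_neg_of_neg_of_pos (hneg i) (sq_pos_of_ne_zero (hε i))

theorem polarizedLoop_integral_eq_zero (n : ℕ) (hn : 2 ≤ n)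
    (c : Fin n → ℝ) (ε : Fin n → ℝ) (hε : ∀ i, ε i = 1 ∨ ε i = -1)
    (θ : Fin n → ℂ)
    (hθ : (∀ i, 0 < ε i * (θ i).im) ∨ (∀ i, ε i * (θ i).im < 0)) :
    Integrable (fun e : ℝ => ∏ i : Fin n, ((ε i : ℂ) * (e : ℂ) + (c i : ℂ) - θ i)⁻¹) ∧
    ∫ e : ℝ, ∏ i : Fin n, ((ε i : ℂ) * (e : ℂ) + (c i : ℂ) - θ i)⁻¹ = 0 :=
  polarizedLoop_integral_eq_zero_general (hn.trans_eq (Fintype.card_fin n).symm) c ε θ hθ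
end

section
/- Let n₊, n₋ ≥ 1 be natural numbers with n₊ + n₋ ≥ 2, and let θ⁺, θ⁻ ∈ ℂ with Im(θ⁺) > 0 and Im(θ⁻) < 0. Then the function e ↦ 1/((e − θ⁺)^{n₊} (e − θ⁻)^{n₋}) is (Bochner) integrable on ℝ and (1/(2π)) ∫_{ℝ} de/((e − θ⁺)^{n₊} (e − θ⁻)^{n₋}) = C(n₊ + n₋ − 2, n₊ − 1) · i · (−1)^{n₊+1} / (θ⁺ − θ⁻)^{n₊ + n₋ − 1}, where C(·,·) denotes the binomial coefficient. -/
open MeasureTheory Complex Real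

/-!
Integrating the derivative of `(z - θ⁺)⁻ᵖ (z - θ⁻)⁻ᵐ` over the line trades one order of the pole
`θ⁺` for one order of the pole `θ⁻`, at the cost of a factor `-m / p`. Iterating makes `θ⁺` a simple
pole and produces the signed binomial coefficient. Partial fractions then reduce the order of `θ⁻`,
because a single pole of order at least two integrates to zero. For two simple poles a primitive is
the logarithm of `(θ⁺ - z) / (z - θ⁻)`: as `z` runs along the line this ratio goes once around the
origin, from `-1` to `-1`, without crossing the branch cut, so that the integral is `2πi`.
-/

open Asymptotics Bornology Filter
open scoped Topology

/-- The integrand with a pole of order `p` at `a` and a pole of order `m` at `b`, as a function of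
a complex energy, so that its calculus and asymptotics can be done before restricting it to `ℝ`. -/
noncomputable def twoPoleIntegrand (a b : ℂ) (p m : ℕ) (z : ℂ) : ℂ :=
  ((z - a) ^ p * (z - b) ^ m)⁻¹

/-- The Möbius transformation with zero `a`, pole `b` and value `-1` at infinity, whose logarithm
is a primitive of a multiple of the integrand with two simple poles. -/
noncomputable def poleRatio (a b z : ℂ) : ℂ := (a - z) / (z - b)

section Asymptotics

theorem inv_sub_const_isBigO_cobounded (a : ℂ) :
    (fun z => (z - a)⁻¹) =O[cobounded ℂ] fun z => z⁻¹ :=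
  (isLittleO_const_id_cobounded a).right_isBigO_sub.inv_rev <|
    (eventually_ne_cobounded 0).mono fun _ hz hz0 => absurd hz0 hz

theorem twoPoleIntegrand_isBigO_cobounded (a b : ℂ) (p m : ℕ) :
    twoPoleIntegrand a b p m =O[cobounded ℂ] fun z => (z ^ (p + m))⁻¹ := by
  have h := ((inv_sub_const_isBigO_cobounded a).pow p).mul
    ((inv_sub_const_isBigO_cobounded b).pow m)
  simpa only [inv_pow, ← mul_inv, ← pow_add] using! h

theorem tendsto_twoPoleIntegrand_cobounded (a b : ℂ) {p m : ℕ} (h : p + m ≠ 0) :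
    Tendsto (twoPoleIntegrand a b p m) (cobounded ℂ) (𝓝 0) := by
  refine (twoPoleIntegrand_isBigO_cobounded a b p m).trans_tendsto ?_
  simpa only [inv_pow, zero_pow h] using (tendsto_inv₀_cobounded (α := ℂ)).pow (p + m)

theorem inv_pow_isBigO_inv_one_add_sq {n : ℕ} (hn : 2 ≤ n) :
    (fun x : ℝ => (x ^ n)⁻¹) =O[cobounded ℝ] fun x => (1 + x ^ 2)⁻¹ := by
  have h : (fun x : ℝ => x ^ 0 + x ^ 2) =O[cobounded ℝ] fun x => x ^ n :=
    (isBigO_pow_pow_cobounded_of_le n.zero_le).add (isBigO_pow_pow_cobounded_of_le hn)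
  simp only [pow_zero] at h
  exact h.inv_rev <| .of_forall fun x hx => absurd hx (by positivity)

end Asymptotics

section RealLine

variable {a b : ℂ}

theorem ofReal_ne_of_im_ne_zero (ha : a.im ≠ 0) (e : ℝ) : (e : ℂ) ≠ a := by
  rintro rfl
  exact ha (ofReal_im e)

theorem continuous_twoPoleIntegrand_ofReal (ha : a.im ≠ 0) (hb : b.im ≠ 0) (p m : ℕ) :
    Continuous fun e : ℝ => twoPoleIntegrand a b p m e := by
  refine Continuous.inv₀ (by fun_prop) fun e => ?_
  exact mul_ne_zero (pow_ne_zero _ (sub_ne_zero.mpr (ofReal_ne_of_im_ne_zero ha e)))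
    (pow_ne_zero _ (sub_ne_zero.mpr (ofReal_ne_of_im_ne_zero hb e)))

theorem integrable_twoPoleIntegrand (ha : a.im ≠ 0) (hb : b.im ≠ 0) {p m : ℕ} (h : 2 ≤ p + m) :
    Integrable fun e : ℝ => twoPoleIntegrand a b p m e := by
  have hpow : (fun e : ℝ => ((e : ℂ) ^ (p + m))⁻¹) =O[cobounded ℝ] fun e => (1 + e ^ 2)⁻¹ := by
    exact_mod_cast Complex.isBigO_ofReal_left.mpr (inv_pow_isBigO_inv_one_add_sq h)
  refine (continuous_twoPoleIntegrand_ofReal ha hb p m).locallyIntegrable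
    |>.integrable_of_isBigO_cocompact ?_ (integrable_inv_one_add_sq.integrableAtFilter _)
  rw [← Metric.cobounded_eq_cocompact]
  exact ((twoPoleIntegrand_isBigO_cobounded a b p m).comp_tendsto
    (RCLike.tendsto_ofReal_cobounded_cobounded ℂ)).trans hpow

end RealLine

section Reduction

variable {a b : ℂ}

theorem hasDerivAt_inv_sub_const_pow {z : ℂ} (hz : z ≠ a) (n : ℕ) :
    HasDerivAt (fun w => ((w - a) ^ n)⁻¹) (-(n * ((z - a) ^ (n + 1))⁻¹)) z := by
  have hpow : HasDerivAt (fun w => (w - a) ^ (-n : ℤ)) _ z :=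
    (hasDerivAt_zpow (-n : ℤ) (z - a) (.inl (sub_ne_zero.mpr hz))).comp_sub_const z a
  simp only [zpow_neg, zpow_natCast] at hpow
  refine hpow.congr_deriv ?_
  have hexp : (-n - 1 : ℤ) = -((n + 1 : ℕ) : ℤ) := by lia
  rw [hexp, zpow_neg, zpow_natCast, Int.cast_neg, Int.cast_natCast, neg_mul]

theorem hasDerivAt_twoPoleIntegrand {z : ℂ} (ha : z ≠ a) (hb : z ≠ b) (p m : ℕ) :
    HasDerivAt (twoPoleIntegrand a b p m)
      (-(p * twoPoleIntegrand a b (p + 1) m z + m * twoPoleIntegrand a b p (m + 1) z)) z := by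
  have hmul := (hasDerivAt_inv_sub_const_pow ha p).fun_mul (hasDerivAt_inv_sub_const_pow hb m)
  simp only [← mul_inv] at hmul
  refine hmul.congr_deriv ?_
  simp only [twoPoleIntegrand, mul_inv]
  ring

theorem integral_twoPoleIntegrand_by_parts (ha : a.im ≠ 0) (hb : b.im ≠ 0) {p m : ℕ}
    (h : p + m ≠ 0) :
    p * (∫ e : ℝ, twoPoleIntegrand a b (p + 1) m e) +
      m * ∫ e : ℝ, twoPoleIntegrand a b p (m + 1) e = 0 := by
  have hp := (integrable_twoPoleIntegrand ha hb (p := p + 1) (m := m) (by lia)).const_mul (p : ℂ)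
  have hm := (integrable_twoPoleIntegrand ha hb (p := p) (m := m + 1) (by lia)).const_mul (m : ℂ)
  have hderiv (e : ℝ) := (hasDerivAt_twoPoleIntegrand (ofReal_ne_of_im_ne_zero ha e)
    (ofReal_ne_of_im_ne_zero hb e) p m).comp_ofReal
  have hlim := tendsto_twoPoleIntegrand_cobounded a b h
  have hint := integral_of_hasDerivAt_of_tendsto hderiv (hp.add hm).neg
    (hlim.comp (RCLike.tendsto_ofReal_atBot_cobounded ℂ))
    (hlim.comp (RCLike.tendsto_ofReal_atTop_cobounded ℂ))
  rwa [integral_neg, integral_add hp hm, integral_const_mul, integral_const_mul, sub_zero,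
    neg_eq_zero] at hint

theorem integral_inv_sub_const_pow_eq_zero (ha : a.im ≠ 0) (n : ℕ) :
    ∫ e : ℝ, (((e : ℂ) - a) ^ (n + 2))⁻¹ = 0 := by
  have h := integral_twoPoleIntegrand_by_parts ha ha (p := 0) (m := n + 1) (by lia)
  simpa [twoPoleIntegrand, Nat.cast_add_one_ne_zero] using h

theorem sub_mul_twoPoleIntegrand {z : ℂ} (ha : z ≠ a) (hb : z ≠ b) (p m : ℕ) :
    (a - b) * twoPoleIntegrand a b (p + 1) (m + 1) z =
      twoPoleIntegrand a b (p + 1) m z - twoPoleIntegrand a b p (m + 1) z := by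
  simp only [twoPoleIntegrand]
  field_simp [sub_ne_zero.mpr ha, sub_ne_zero.mpr hb]
  ring

theorem sub_mul_integral_twoPoleIntegrand (ha : a.im ≠ 0) (hb : b.im ≠ 0) {p m : ℕ}
    (h : p + m ≠ 0) :
    (a - b) * ∫ e : ℝ, twoPoleIntegrand a b (p + 1) (m + 1) e =
      (∫ e : ℝ, twoPoleIntegrand a b (p + 1) m e) -
        ∫ e : ℝ, twoPoleIntegrand a b p (m + 1) e := by
  rw [← integral_const_mul, ← integral_sub (integrable_twoPoleIntegrand ha hb (by lia))
    (integrable_twoPoleIntegrand ha hb (by lia))]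
  exact integral_congr_ae <| .of_forall fun e => sub_mul_twoPoleIntegrand
    (ofReal_ne_of_im_ne_zero ha e) (ofReal_ne_of_im_ne_zero hb e) p m

end Reduction

section SimplePoles

variable {a b : ℂ}

theorem hasDerivAt_log_poleRatio {z : ℂ} (hz : poleRatio a b z ∈ slitPlane) :
    HasDerivAt (fun w => log (poleRatio a b w)) ((a - b) * twoPoleIntegrand a b 1 1 z) z := by
  obtain ⟨ha, hb⟩ : a - z ≠ 0 ∧ z - b ≠ 0 := div_ne_zero_iff.mp (slitPlane_ne_zero hz)
  have hratio : HasDerivAt (poleRatio a b) _ z :=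
    ((hasDerivAt_id z).const_sub a).div ((hasDerivAt_id z).sub_const b) hb
  refine (hratio.clog hz).congr_deriv ?_
  have ha' : z - a ≠ 0 := by rwa [← neg_sub, neg_ne_zero]
  simp only [poleRatio, twoPoleIntegrand, id]
  field_simp
  ring

theorem poleRatio_ofReal_mem_slitPlane (ha : 0 < a.im) (hb : b.im < 0) (e : ℝ) :
    poleRatio a b e ∈ slitPlane := by
  rw [mem_slitPlane_iff_not_le_zero, Complex.le_def]
  rintro ⟨hre, him⟩
  have hmul : poleRatio a b e * (e - b) = a - e :=
    div_mul_cancel₀ _ (sub_ne_zero.mpr (ofReal_ne_of_im_ne_zero hb.ne e))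
  have him_mul : (poleRatio a b e).re * -b.im = a.im := by
    simpa [him] using congrArg im hmul
  simp only [zero_re] at hre
  nlinarith

theorem poleRatio_ofReal_im (a b : ℂ) (e : ℝ) :
    (poleRatio a b e).im =
      ((a.im - b.im) * e - (a.im * b.re - a.re * b.im)) / normSq (e - b) := by
  rw [poleRatio, Complex.div_im]
  simp only [sub_re, sub_im, ofReal_re, ofReal_im]
  ring

theorem tendsto_poleRatio_cobounded (a b : ℂ) :
    Tendsto (poleRatio a b) (cobounded ℂ) (𝓝 (-1)) := by
  have hinv : Tendsto (fun z => (a - b) * (z - b)⁻¹ - 1) (cobounded ℂ) (𝓝 (-1)) := by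
    simpa using ((tendsto_inv₀_cobounded.comp (tendsto_sub_const_cobounded b)).const_mul
      (a - b)).sub_const 1
  refine hinv.congr' ?_
  filter_upwards [eventually_ne_cobounded b] with z hz
  have hz' := sub_ne_zero.mpr hz
  rw [poleRatio]
  field_simp
  ring

theorem tendsto_log_poleRatio_atTop (h : b.im < a.im) :
    Tendsto (fun e : ℝ => log (poleRatio a b e)) atTop (𝓝 (π * I)) := by
  have him : ∀ᶠ e : ℝ in atTop, 0 ≤ (poleRatio a b e).im := by
    filter_upwards [eventually_ge_atTop ((a.im * b.re - a.re * b.im) / (a.im - b.im))] with e he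
    rw [div_le_iff₀' (sub_pos.mpr h)] at he
    rw [poleRatio_ofReal_im]
    exact div_nonneg (sub_nonneg.mpr he) (normSq_nonneg _)
  have hlim := (tendsto_poleRatio_cobounded a b).comp (RCLike.tendsto_ofReal_atTop_cobounded ℂ)
  simpa using! (tendsto_log_nhdsWithin_im_nonneg_of_re_neg_of_im_zero (z := -1)
    (by simp) (by simp)).comp (tendsto_nhdsWithin_iff.mpr ⟨hlim, him⟩)

theorem tendsto_log_poleRatio_atBot (h : b.im < a.im) :
    Tendsto (fun e : ℝ => log (poleRatio a b e)) atBot (𝓝 (-(π * I))) := by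
  have him : ∀ᶠ e : ℝ in atBot, (poleRatio a b e).im < 0 := by
    filter_upwards [eventually_lt_atBot ((a.im * b.re - a.re * b.im) / (a.im - b.im)),
      (RCLike.tendsto_ofReal_atBot_cobounded ℂ).eventually_ne_cobounded b] with e he hne
    rw [lt_div_iff₀' (sub_pos.mpr h)] at he
    rw [poleRatio_ofReal_im]
    exact div_neg_of_neg_of_pos (sub_neg.mpr he) (normSq_pos.mpr (sub_ne_zero.mpr hne))
  have hlim := (tendsto_poleRatio_cobounded a b).comp (RCLike.tendsto_ofReal_atBot_cobounded ℂ)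
  simpa using! (tendsto_log_nhdsWithin_im_neg_of_re_neg_of_im_zero (z := -1)
    (by simp) (by simp)).comp (tendsto_nhdsWithin_iff.mpr ⟨hlim, him⟩)

theorem sub_mul_integral_twoPoleIntegrand_one_one (ha : 0 < a.im) (hb : b.im < 0) :
    (a - b) * ∫ e : ℝ, twoPoleIntegrand a b 1 1 e = 2 * π * I := by
  have hderiv (e : ℝ) :=
    (hasDerivAt_log_poleRatio (poleRatio_ofReal_mem_slitPlane ha hb e)).comp_ofReal
  rw [← integral_const_mul, integral_of_hasDerivAt_of_tendsto hderiv
    ((integrable_twoPoleIntegrand ha.ne' hb.ne le_rfl).const_mul _)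
    (tendsto_log_poleRatio_atBot (hb.trans ha)) (tendsto_log_poleRatio_atTop (hb.trans ha))]
  ring

end SimplePoles

section TwoSidedPoles

variable {a b : ℂ}

theorem pow_mul_integral_twoPoleIntegrand_one (ha : 0 < a.im) (hb : b.im < 0) (m : ℕ) :
    (a - b) ^ (m + 1) * ∫ e : ℝ, twoPoleIntegrand a b 1 (m + 1) e = 2 * π * I := by
  induction m with
  | zero => simpa using sub_mul_integral_twoPoleIntegrand_one_one ha hb
  | succ m ih =>
    have hzero : ∫ e : ℝ, twoPoleIntegrand a b 0 (m + 2) e = 0 := by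
      simpa [twoPoleIntegrand] using integral_inv_sub_const_pow_eq_zero hb.ne m
    have hstep := sub_mul_integral_twoPoleIntegrand ha.ne' hb.ne (p := 0) (m := m + 1) (by lia)
    rw [hzero, sub_zero] at hstep
    rw [pow_succ, mul_assoc, hstep, ih]

theorem pow_mul_integral_twoPoleIntegrand (ha : 0 < a.im) (hb : b.im < 0) (p m : ℕ) :
    (a - b) ^ (p + m + 1) * ∫ e : ℝ, twoPoleIntegrand a b (p + 1) (m + 1) e =
      2 * π * I * (-1) ^ p * (p + m).choose p := by
  induction p generalizing m with
  | zero => simpa using pow_mul_integral_twoPoleIntegrand_one ha hb m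
  | succ p ih =>
    have hchoose : ((p + 1 + m).choose (p + 1) : ℂ) * (p + 1) =
        (p + (m + 1)).choose p * (m + 1) := by
      have h := Nat.choose_succ_right_eq (p + (m + 1)) p
      rw [Nat.add_sub_cancel_left] at h
      rw [add_right_comm, add_assoc]
      exact_mod_cast h
    have hparts := integral_twoPoleIntegrand_by_parts ha.ne' hb.ne (p := p + 1) (m := m + 1)
      (by lia)
    push_cast at hparts
    have hp : (p : ℂ) + 1 ≠ 0 := Nat.cast_add_one_ne_zero p
    have hih := ih (m + 1)
    refine mul_right_cancel₀ hp ?_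
    rw [show p + 1 + m + 1 = p + (m + 1) + 1 by ring]
    linear_combination (a - b) ^ (p + (m + 1) + 1) * hparts - (m + 1) * hih -
      2 * π * I * (-1) ^ (p + 1) * hchoose

end TwoSidedPoles

theorem twoSidedPoles_integral_value (np nm : ℕ) (hnp : 1 ≤ np) (hnm : 1 ≤ nm)
    (hsum : 2 ≤ np + nm) (θp θm : ℂ) (hp : 0 < θp.im) (hm : θm.im < 0) :
    Integrable (fun e : ℝ => (((e : ℂ) - θp) ^ np * ((e : ℂ) - θm) ^ nm)⁻¹) ∧
    (1 / (2 * (π : ℂ))) * ∫ e : ℝ, (((e : ℂ) - θp) ^ np * ((e : ℂ) - θm) ^ nm)⁻¹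
      = (Nat.choose (np + nm - 2) (np - 1) : ℂ) * Complex.I * (-1) ^ (np + 1)
          / (θp - θm) ^ (np + nm - 1) := by
  refine ⟨integrable_twoPoleIntegrand hp.ne' hm.ne hsum, ?_⟩
  obtain ⟨p, rfl⟩ := Nat.exists_eq_add_of_le' hnp
  obtain ⟨m, rfl⟩ := Nat.exists_eq_add_of_le' hnm
  have hθ : θp - θm ≠ 0 := fun h => (hm.trans hp).ne' (congrArg im (sub_eq_zero.mp h))
  have hπ : (π : ℂ) ≠ 0 := ofReal_ne_zero.mpr pi_ne_zero
  have hvalue := pow_mul_integral_twoPoleIntegrand hp hm p m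
  simp only [twoPoleIntegrand] at hvalue
  rw [show p + 1 + (m + 1) - 2 = p + m by lia, show p + 1 + (m + 1) - 1 = p + m + 1 by lia,
    Nat.add_sub_cancel, eq_div_iff (pow_ne_zero _ hθ), mul_assoc, mul_comm (∫ e : ℝ, _), hvalue]
  field_simp
  ring
end

section
/- Let a, b ∈ ℂ with a ≠ b. If Im(a) < 0 and Im(b) < 0, then lim_{R → ∞} ∫_{−R}^{R} E/((E − a)(E − b)) dE = −πi; if Im(a) > 0 and Im(b) > 0, then lim_{R → ∞} ∫_{−R}^{R} E/((E − a)(E − b)) dE = +πi. In both cases the limit of integrals over symmetric intervals [−R, R] exists. -/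
open Complex Filter Real intervalIntegral

/-!
If `f` is holomorphic in the upper half-plane and `z • f z → c` at infinity there, then
`f z - (z + I)⁻¹ • c` is `o(1 / z)`. Shifting its integral over `[-R, R]` to the other three sides
of a rectangle of size `R` shows that this integral tends to `0`, so the limit for `f` is that for
`(z + I)⁻¹ • c`, which is explicit: only the even part `-I / (1 + x ^ 2)` of `1 / (x + I)` survives
on a symmetric interval. The lower half-plane follows by `z ↦ -z`, which replaces `c` by `-c`.
-/

open Bornology Set Topology

lemma integral_symm_add_comp_neg {E : Type*} [NormedAddCommGroup E] [NormedSpace ℝ E] {g : ℝ → E}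
    {R : ℝ} (hg : IntervalIntegrable g MeasureTheory.volume (-R) R) :
    ∫ x in (-R)..R, (g x + g (-x)) = (2 : ℝ) • ∫ x in (-R)..R, g x := by
  have hg_neg : IntervalIntegrable (fun x => g (-x)) MeasureTheory.volume (-R) R := by
    simpa only [neg_neg] using (IntervalIntegrable.iff_comp_neg (f := g)).1 hg |>.symm
  rw [integral_add hg hg_neg, integral_comp_neg, neg_neg, two_smul]

lemma integral_symm_inv_add_I (R : ℝ) :
    ∫ x : ℝ in (-R)..R, ((x : ℂ) + I)⁻¹ = -I * (2 * Real.arctan R : ℝ) := by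
  have hne (x : ℝ) : (x : ℂ) + I ≠ 0 := fun h => by simpa using congrArg im h
  have hcont : Continuous fun x : ℝ => ((x : ℂ) + I)⁻¹ := Continuous.inv₀ (by fun_prop) hne
  have hadd_neg (x : ℝ) :
      ((x : ℂ) + I)⁻¹ + (((-x : ℝ) : ℂ) + I)⁻¹ = 2 * (-I * ((1 + x ^ 2)⁻¹ : ℝ)) := by
    have hx := hne x
    have hx' := hne (-x)
    have hprod : (1 + x ^ 2 : ℂ) = -((x + I) * ((-x : ℝ) + I)) := by
      push_cast
      linear_combination I_sq
    push_cast [hprod] at hx' ⊢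
    field_simp
    ring
  refine smul_right_injective ℂ (two_ne_zero (α := ℝ)) ?_
  calc (2 : ℝ) • ∫ x : ℝ in (-R)..R, ((x : ℂ) + I)⁻¹
      = ∫ x : ℝ in (-R)..R, (((x : ℂ) + I)⁻¹ + (((-x : ℝ) : ℂ) + I)⁻¹) :=
        (integral_symm_add_comp_neg (hcont.intervalIntegrable _ _)).symm
    _ = 2 * (-I * (Real.arctan R - Real.arctan (-R) : ℝ)) := by
        simp only [hadd_neg, intervalIntegral.integral_const_mul, intervalIntegral.integral_ofReal,
          integral_inv_one_add_sq]
    _ = (2 : ℝ) • (-I * (2 * Real.arctan R : ℝ)) := by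
        rw [Real.arctan_neg, sub_neg_eq_add, two_mul (Real.arctan R), real_smul, ofReal_ofNat]

lemma tendsto_integral_symm_inv_add_I :
    Tendsto (fun R : ℝ => ∫ x : ℝ in (-R)..R, ((x : ℂ) + I)⁻¹) atTop (𝓝 (-(π : ℂ) * I)) := by
  simp only [integral_symm_inv_add_I]
  have harctan : Tendsto (fun R => 2 * Real.arctan R) atTop (𝓝 π) := by
    simpa only [mul_div_cancel₀ π (two_ne_zero (α := ℝ))] using
      (tendsto_nhds_of_tendsto_nhdsWithin Real.tendsto_arctan_atTop).const_mul 2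
  rw [neg_mul_comm, mul_comm]
  exact ((continuous_ofReal.tendsto π).comp harctan).const_mul (-I)

lemma tendsto_mul_inv_sub_cobounded {𝕜 : Type*} [NormedField 𝕜] (a : 𝕜) :
    Tendsto (fun z => z * (z - a)⁻¹) (cobounded 𝕜) (𝓝 1) := by
  have hinv : Tendsto (fun z => 1 + a * (z - a)⁻¹) (cobounded 𝕜) (𝓝 (1 + a * 0)) :=
    ((tendsto_inv₀_cobounded.comp (tendsto_sub_const_cobounded a)).const_mul a).const_add 1
  rw [mul_zero, add_zero] at hinv
  refine hinv.congr' ?_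
  filter_upwards [eventually_ne_cobounded a] with z hz
  have hza := sub_ne_zero.2 hz
  field_simp
  ring

lemma tendsto_mul_div_sub_mul_sub_cobounded {𝕜 : Type*} [NormedField 𝕜] (a b : 𝕜) :
    Tendsto (fun z => z * (z / ((z - a) * (z - b)))) (cobounded 𝕜) (𝓝 1) := by
  have h := (tendsto_mul_inv_sub_cobounded a).mul (tendsto_mul_inv_sub_cobounded b)
  rw [mul_one] at h
  refine h.congr fun z => ?_
  rw [div_eq_mul_inv, mul_inv]
  ring

lemma diffContOnCl_div_sub_mul_sub {𝕜 : Type*} [NontriviallyNormedField 𝕜] {s : Set 𝕜} {a b : 𝕜}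
    (ha : a ∉ closure s) (hb : b ∉ closure s) :
    DiffContOnCl 𝕜 (fun z => z / ((z - a) * (z - b))) s :=
  DifferentiableOn.diffContOnCl <| differentiableOn_id.div (by fun_prop) fun _ hz =>
    mul_ne_zero (sub_ne_zero.2 (ne_of_mem_of_not_mem hz ha))
      (sub_ne_zero.2 (ne_of_mem_of_not_mem hz hb))

section HalfPlane

variable {E : Type*} [NormedAddCommGroup E] [NormedSpace ℂ E] {f : ℂ → E} {c : E}

lemma integral_eq_rect_sides_of_diffContOnCl (hf : DiffContOnCl ℂ f {z | 0 < z.im})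
    (a b : ℝ) {h : ℝ} (hh : 0 ≤ h) :
    ∫ x in a..b, f x = (∫ x in a..b, f (x + h * I)) - I • (∫ y in 0..h, f (b + y * I)) +
      I • ∫ y in 0..h, f (a + y * I) := by
  have hcont : ContinuousOn f (uIcc a b ×ℂ uIcc 0 h) := by
    refine hf.continuousOn.mono fun z hz => ?_
    rw [closure_setOfPred_lt_im]
    exact (uIcc_of_le hh ▸ hz.2 : z.im ∈ Icc 0 h).1
  have hdiff : DifferentiableOn ℂ f (Ioo (min a b) (max a b) ×ℂ Ioo (min 0 h) (max 0 h)) :=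
    hf.differentiableOn.mono fun z hz => (min_eq_left hh ▸ hz.2.1 : 0 < z.im)
  have hrect := integral_boundary_rect_eq_zero_of_continuousOn_of_differentiableOn f a (b + h * I)
    (by simpa using hcont) (by simpa using hdiff)
  simp only [ofReal_re, ofReal_im, add_re, add_im, re_ofReal_mul, im_ofReal_mul, I_re, I_im,
    mul_zero, mul_one, add_zero, zero_add, ofReal_zero, zero_mul] at hrect
  rw [← sub_eq_zero, ← hrect]
  abel

lemma norm_integral_symm_le_of_diffContOnCl (hf : DiffContOnCl ℂ f {z | 0 < z.im})
    {R C : ℝ} (hR : 0 ≤ R) (hC : ∀ z : ℂ, 0 ≤ z.im → R ≤ ‖z‖ → ‖f z‖ ≤ C) :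
    ‖∫ x in (-R)..R, f x‖ ≤ 4 * R * C := by
  have htop : ‖∫ x in (-R)..R, f (x + R * I)‖ ≤ C * |R - -R| :=
    norm_integral_le_of_norm_le_const fun x _ => hC _ (by simpa using hR) <| by
      simpa [abs_of_nonneg hR] using abs_im_le_norm (x + R * I)
  have hside (s : ℝ) (hs : |s| = R) : ‖I • ∫ y in 0..R, f (s + y * I)‖ ≤ C * |R - 0| := by
    rw [norm_smul, norm_I, one_mul]
    refine norm_integral_le_of_norm_le_const fun y hy => hC _ ?_ ?_
    · simpa using (uIoc_of_le hR ▸ hy : y ∈ Ioc 0 R).1.le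
    · simpa [hs] using abs_re_le_norm (s + y * I)
  calc ‖∫ x in (-R)..R, f x‖
      = ‖(∫ x in (-R)..R, f (x + R * I)) - I • (∫ y in 0..R, f (R + y * I)) +
          I • ∫ y in 0..R, f ((-R : ℝ) + y * I)‖ := by
        rw [integral_eq_rect_sides_of_diffContOnCl hf (-R) R hR]
    _ ≤ C * |R - -R| + C * |R - 0| + C * |R - 0| :=
        norm_add_le_of_le (norm_sub_le_of_le htop (hside R (abs_of_nonneg hR)))
          (hside (-R) (by rw [abs_neg, abs_of_nonneg hR]))
    _ = 4 * R * C := by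
        rw [sub_neg_eq_add, sub_zero, abs_of_nonneg hR, abs_of_nonneg (add_nonneg hR hR)]
        ring

lemma tendsto_integral_symm_zero_of_diffContOnCl (hf : DiffContOnCl ℂ f {z | 0 < z.im})
    (hlim : Tendsto (fun z => z • f z) (cobounded ℂ ⊓ 𝓟 {z | 0 ≤ z.im}) (𝓝 0)) :
    Tendsto (fun R : ℝ => ∫ x in (-R)..R, f x) atTop (𝓝 0) := by
  refine NormedAddGroup.tendsto_nhds_zero.2 fun ε hε => ?_
  have hsmall := NormedAddGroup.tendsto_nhds_zero.1 hlim (ε / 5) (by positivity)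
  obtain ⟨M, -, hM⟩ := (hasBasis_cobounded_norm.inf_principal _).eventually_iff.1 hsmall
  filter_upwards [eventually_ge_atTop M, eventually_gt_atTop 0] with R hMR hR
  have hbound (z : ℂ) (hz : 0 ≤ z.im) (hRz : R ≤ ‖z‖) : ‖f z‖ ≤ ε / 5 / R := by
    rw [le_div_iff₀' hR]
    calc R * ‖f z‖ ≤ ‖z‖ * ‖f z‖ := by gcongr
      _ = ‖z • f z‖ := (norm_smul z (f z)).symm
      _ ≤ ε / 5 := (hM ⟨hMR.trans hRz, hz⟩).le
  calc ‖∫ x in (-R)..R, f x‖ ≤ 4 * R * (ε / 5 / R) :=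
        norm_integral_symm_le_of_diffContOnCl hf hR.le hbound
    _ = 4 / 5 * ε := by field_simp
    _ < ε := by linarith

variable [CompleteSpace E]

lemma tendsto_integral_symm_of_diffContOnCl (hf : DiffContOnCl ℂ f {z | 0 < z.im})
    (hlim : Tendsto (fun z => z • f z) (cobounded ℂ ⊓ 𝓟 {z | 0 ≤ z.im}) (𝓝 c)) :
    Tendsto (fun R : ℝ => ∫ x in (-R)..R, f x) atTop (𝓝 ((-(π : ℂ) * I) • c)) := by
  have hne (z : ℂ) (hz : z ∈ closure {z : ℂ | 0 < z.im}) : z + I ≠ 0 := by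
    rw [closure_setOfPred_lt_im] at hz
    intro h
    have him : z.im + 1 = 0 := by simpa using congrArg im h
    linarith [show 0 ≤ z.im from hz]
  have hinv : DiffContOnCl ℂ (fun z : ℂ => (z + I)⁻¹ • c) {z | 0 < z.im} :=
    DifferentiableOn.diffContOnCl <|
      (DifferentiableOn.inv (by fun_prop) hne).smul_const c
  have hinv_lim : Tendsto (fun z => z • (z + I)⁻¹ • c) (cobounded ℂ ⊓ 𝓟 {z | 0 ≤ z.im}) (𝓝 c) := by
    simpa only [sub_neg_eq_add, smul_smul, one_smul] using
      ((tendsto_mul_inv_sub_cobounded (-I)).mono_left inf_le_left).smul_const c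
  have hdiff : Tendsto (fun R : ℝ => ∫ x in (-R)..R, (f x - ((x : ℂ) + I)⁻¹ • c)) atTop (𝓝 0) :=
    tendsto_integral_symm_zero_of_diffContOnCl (hf.sub hinv) <| by
      simpa only [Pi.sub_apply, smul_sub, sub_self] using hlim.sub hinv_lim
  have hint {g : ℂ → E} (hg : DiffContOnCl ℂ g {z | 0 < z.im}) (R : ℝ) :
      IntervalIntegrable (fun x : ℝ => g x) MeasureTheory.volume (-R) R :=
    (hg.continuousOn.comp_continuous continuous_ofReal fun x => by
      simp [closure_setOfPred_lt_im]).intervalIntegrable _ _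
  have hsum := hdiff.add (tendsto_integral_symm_inv_add_I.smul_const c)
  rw [zero_add] at hsum
  refine hsum.congr fun R => ?_
  rw [integral_sub (hint hf R) (hint hinv R), intervalIntegral.integral_smul_const, sub_add_cancel]

theorem contactTerm_integral_general :
    (DiffContOnCl ℂ f {z | z.im < 0} →
        Tendsto (fun z => z • f z) (cobounded ℂ ⊓ 𝓟 {z | z.im ≤ 0}) (𝓝 c) →
      Tendsto (fun R : ℝ => ∫ x in (-R)..R, f x) atTop (𝓝 (((π : ℂ) * I) • c))) ∧
    (DiffContOnCl ℂ f {z | 0 < z.im} →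
        Tendsto (fun z => z • f z) (cobounded ℂ ⊓ 𝓟 {z | 0 ≤ z.im}) (𝓝 c) →
      Tendsto (fun R : ℝ => ∫ x in (-R)..R, f x) atTop (𝓝 ((-(π : ℂ) * I) • c))) := by
  refine ⟨fun hf hlim => ?_, tendsto_integral_symm_of_diffContOnCl⟩
  have hf_neg : DiffContOnCl ℂ (fun z => f (-z)) {z | 0 < z.im} :=
    hf.comp differentiable_neg.diffContOnCl fun z hz => by simpa using hz
  have hneg : Tendsto Neg.neg (cobounded ℂ ⊓ 𝓟 {z | 0 ≤ z.im}) (cobounded ℂ ⊓ 𝓟 {z | z.im ≤ 0}) :=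
    tendsto_neg_cobounded.inf (tendsto_principal_principal.2 fun z hz => by simpa using hz)
  have hlim_neg : Tendsto (fun z => z • f (-z)) (cobounded ℂ ⊓ 𝓟 {z | 0 ≤ z.im}) (𝓝 (-c)) := by
    simpa only [Function.comp_def, neg_smul, neg_neg] using (hlim.comp hneg).neg
  have h := tendsto_integral_symm_of_diffContOnCl hf_neg hlim_neg
  rw [smul_neg, ← neg_smul, neg_mul, neg_neg] at h
  refine h.congr fun R => ?_
  simpa using integral_comp_neg (a := -R) (b := R) fun x : ℝ => f x

end HalfPlane

theorem contactTerm_integral (a b : ℂ) (hab : a ≠ b) :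
    ((a.im < 0 ∧ b.im < 0) → Tendsto (fun R : ℝ => ∫ E in (-R)..R,
        (E : ℂ) / (((E : ℂ) - a) * ((E : ℂ) - b))) atTop
      (nhds (-(π : ℂ) * Complex.I))) ∧
    ((0 < a.im ∧ 0 < b.im) → Tendsto (fun R : ℝ => ∫ E in (-R)..R,
        (E : ℂ) / (((E : ℂ) - a) * ((E : ℂ) - b))) atTop
      (nhds ((π : ℂ) * Complex.I))) := by
  have hlim := tendsto_mul_div_sub_mul_sub_cobounded a b
  refine ⟨fun ⟨ha, hb⟩ => ?_, fun ⟨ha, hb⟩ => ?_⟩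
  · simpa only [smul_eq_mul, mul_one] using contactTerm_integral_general.2
      (diffContOnCl_div_sub_mul_sub (by simpa) (by simpa)) (hlim.mono_left inf_le_left)
  · simpa only [smul_eq_mul, mul_one] using contactTerm_integral_general.1
      (diffContOnCl_div_sub_mul_sub (by simpa) (by simpa)) (hlim.mono_left inf_le_left)
end

section
/- Let V be a finite type and r : V → V → Prop a relation with no directed cycle (there is no v with Relation.TransGen r v v). Let a, b ∈ V with a ≠ b, and assume there is no directed path from a to b, i.e., ¬ Relation.ReflTransGen r a b. Then there exists t : V → ℝ such that t x < t y whenever r x y, and moreover t b < t a. -/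
/-!
Since there is no directed path from `a` to `b`, adding an edge from `b` to `a` creates no directed
cycle. Reachability in the enlarged relation is then a strict partial order; a linear extension of
it is countable and hence embeds in `ℝ`, and any such embedding places `b` before `a`.
-/

open Relation

section AddEdge

variable {V : Type*}

/-- The directed graph `r` with an additional edge from `u` to `v`; nothing forbids `u = v` or that
the edge is already present. -/
def addEdge (r : V → V → Prop) (u v : V) (x y : V) : Prop :=
  r x y ∨ x = u ∧ y = v

variable {r : V → V → Prop} {u v x y : V}

theorem addEdge_of_rel (h : r x y) : addEdge r u v x y :=
  Or.inl h

theorem addEdge_self (r : V → V → Prop) (u v : V) : addEdge r u v u v :=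
  Or.inr ⟨rfl, rfl⟩

-- A path that uses the new edge several times can be cut down to its part before the first use,
-- the edge itself, and its part after the last use.
theorem transGen_addEdge_iff :
    TransGen (addEdge r u v) x y ↔
      TransGen r x y ∨ ReflTransGen r x u ∧ ReflTransGen r v y := by
  have le_addEdge : r ≤ addEdge r u v := fun _ _ => addEdge_of_rel
  constructor
  · intro h
    induction h with
    | single hxy =>
      obtain hxy | ⟨rfl, rfl⟩ := hxy
      · exact .inl (.single hxy)
      · exact .inr ⟨.refl, .refl⟩
    | tail _ hyz ih =>
      obtain hyz | ⟨rfl, rfl⟩ := hyz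
      · exact ih.imp (·.tail hyz) (And.imp_right (·.tail hyz))
      · exact .inr ⟨ih.elim TransGen.to_reflTransGen And.left, .refl⟩
  · rintro (hxy | ⟨hxu, hvy⟩)
    · exact TransGen.mono le_addEdge _ _ hxy
    · exact (TransGen.tail' (ReflTransGen.mono le_addEdge _ _ hxu) (addEdge_self r u v)).trans_left
        (ReflTransGen.mono le_addEdge _ _ hvy)

theorem irrefl_transGen_addEdge_iff :
    Std.Irrefl (TransGen (addEdge r u v)) ↔
      Std.Irrefl (TransGen r) ∧ ¬ ReflTransGen r v u := by
  constructor
  · refine fun h => ⟨⟨fun x hx => ?_⟩, fun hvu => ?_⟩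
    · exact h.irrefl x (transGen_addEdge_iff.mpr (.inl hx))
    · exact h.irrefl u (transGen_addEdge_iff.mpr (.inr ⟨.refl, hvu⟩))
  · rintro ⟨hr, hvu⟩
    refine ⟨fun x hx => ?_⟩
    obtain hxx | ⟨hxu, hvx⟩ := transGen_addEdge_iff.mp hx
    · exact hr.irrefl x hxx
    · exact hvu (hvx.trans hxu)

end AddEdge

section TimeFunction

variable (α : Type*) [LinearOrder α] [DenselyOrdered α] [Nontrivial α]

theorem exists_strictMono_of_countable (P : Type*) [PartialOrder P] [Countable P] :
    ∃ t : P → α, StrictMono t := by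
  have : Countable (LinearExtension P) := ‹Countable P›
  obtain ⟨e⟩ := Order.embedding_from_countable_to_dense (LinearExtension P) α
  have strictMono_toLinearExtension : StrictMono (toLinearExtension (α := P)) :=
    toLinearExtension.monotone.strictMono_of_injective Function.injective_id
  exact ⟨e ∘ toLinearExtension, e.strictMono.comp strictMono_toLinearExtension⟩

theorem exists_forall_rel_lt_of_irrefl_transGen {V : Type*} [Countable V] {r : V → V → Prop}
    (hr : Std.Irrefl (TransGen r)) :
    ∃ t : V → α, ∀ x y, r x y → t x < t y := by
  have : IsStrictOrder V (TransGen r) := { hr with }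
  let : PartialOrder V := partialOrderOfSO (TransGen r)
  obtain ⟨t, ht⟩ := exists_strictMono_of_countable α V
  exact ⟨t, fun _ _ hxy => ht (TransGen.single hxy)⟩

theorem timeOrdering_separating_general {V : Type*} [Countable V] (r : V → V → Prop)
    (hacyclic : ¬ ∃ v, TransGen r v v) (a b : V) (hpath : ¬ ReflTransGen r a b) :
    ∃ t : V → α, (∀ x y, r x y → t x < t y) ∧ t b < t a := by
  have irrefl_addEdge : Std.Irrefl (TransGen (addEdge r b a)) :=
    irrefl_transGen_addEdge_iff.mpr ⟨⟨not_exists.mp hacyclic⟩, hpath⟩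
  obtain ⟨t, ht⟩ := exists_forall_rel_lt_of_irrefl_transGen α irrefl_addEdge
  exact ⟨t, fun x y hxy => ht x y (addEdge_of_rel hxy), ht b a (addEdge_self r b a)⟩

end TimeFunction

theorem timeOrdering_separating {V : Type*} [Finite V] (r : V → V → Prop)
    (hacyclic : ¬ ∃ v, Relation.TransGen r v v)
    (a b : V) (hab : a ≠ b) (hpath : ¬ Relation.ReflTransGen r a b) :
    ∃ t : V → ℝ, (∀ x y, r x y → t x < t y) ∧ t b < t a :=
  timeOrdering_separating_general ℝ r hacyclic a b hpath
end

section
/- Let ζ₁⁺, ζ₁⁻, ξ₁⁺, ξ₁⁻, ζ₂⁺, ζ₂⁻, ξ₂⁺, ξ₂⁻ ∈ ℂ and let t ∈ ℝ with t ≠ 0. Let θ denote the Heaviside step function (θ(s) = 1 for s > 0, θ(s) = 0 for s < 0) and i the imaginary unit. For j = 1, 2 and s ∈ ℝ define z̃ⱼ(s) = iθ(s)e^{isζⱼ⁺} − iθ(−s)e^{isζⱼ⁻}, w̃ⱼ(s) = iθ(s)e^{isξⱼ⁺} − iθ(−s)e^{isξⱼ⁻}, ũⱼ(s) = iθ(s)e^{isζⱼ⁺}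 − iθ(−s)e^{isξⱼ⁻}, ṽⱼ(s) = iθ(s)e^{isξⱼ⁺} − iθ(−s)e^{isζⱼ⁻}. Then z̃₁(t)·z̃₂(−t) + w̃₁(t)·w̃₂(−t) − ũ₁(t)·ṽ₂(−t) − ṽ₁(t)·ũ₂(−t) = 0. -/
open Complex

/-- The Heaviside step function. -/
noncomputable def heaviside (s : ℝ) : ℝ := if 0 < s then 1 else 0

/-!
For `t ≠ 0` only one of the two step functions in a propagator survives, and the two legs of the
loop see opposite times. Hence one of the two vertices, vertex 2 if `t > 0` and vertex 1 if `t < 0`,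
has the property that marking it does not change the product of the propagators. The factor `-1`
of each mark then makes the four terms cancel in pairs.
-/

theorem heaviside_of_pos {s : ℝ} (hs : 0 < s) : heaviside s = 1 :=
  if_pos hs

theorem heaviside_of_nonpos {s : ℝ} (hs : s ≤ 0) : heaviside s = 0 :=
  if_neg hs.not_gt

section TimeOrderedPropagator

variable {A : Type*}

/-- The coordinate-space propagator of a leg with amplitude `f` for positive and `g` for negative
time separation. In the paper `f` and `g` are exponentials (`energyPhase`); arbitrary functions with
values in a complex vector space include matrix-valued propagators. -/
noncomputable def timeOrderedPropagator [AddCommGroup A] [Module ℂ A] (f g : ℝ → A) (s : ℝ) : A :=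
  (I * heaviside s) • f s - (I * heaviside (-s)) • g s

theorem timeOrderedPropagator_of_pos [AddCommGroup A] [Module ℂ A] (f g : ℝ → A) {s : ℝ}
    (hs : 0 < s) : timeOrderedPropagator f g s = I • f s := by
  simp [timeOrderedPropagator, heaviside_of_pos hs, heaviside_of_nonpos (neg_nonpos.2 hs.le)]

theorem timeOrderedPropagator_of_neg [AddCommGroup A] [Module ℂ A] (f g : ℝ → A) {s : ℝ}
    (hs : s < 0) : timeOrderedPropagator f g s = -(I • g s) := by
  simp [timeOrderedPropagator, heaviside_of_nonpos hs.le, heaviside_of_pos (neg_pos.2 hs)]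

variable [NonUnitalNonAssocRing A] [Module ℂ A] {t : ℝ}

theorem timeOrderedPropagator_mul_neg_congr_of_pos (ht : 0 < t)
    (f₁ g₁ g₁' f₂ f₂' g₂ : ℝ → A) :
    timeOrderedPropagator f₁ g₁ t * timeOrderedPropagator f₂ g₂ (-t) =
      timeOrderedPropagator f₁ g₁' t * timeOrderedPropagator f₂' g₂ (-t) := by
  simp only [timeOrderedPropagator_of_pos _ _ ht,
    timeOrderedPropagator_of_neg _ _ (neg_neg_of_pos ht)]

theorem timeOrderedPropagator_mul_neg_congr_of_neg (ht : t < 0)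
    (f₁ f₁' g₁ f₂ g₂ g₂' : ℝ → A) :
    timeOrderedPropagator f₁ g₁ t * timeOrderedPropagator f₂ g₂ (-t) =
      timeOrderedPropagator f₁' g₁ t * timeOrderedPropagator f₂ g₂' (-t) := by
  simp only [timeOrderedPropagator_of_neg _ _ ht,
    timeOrderedPropagator_of_pos _ _ (neg_pos.2 ht)]

theorem bubble_largest_time_equation_general (ht : t ≠ 0)
    (σ₁p σ₁m τ₁p τ₁m σ₂p σ₂m τ₂p τ₂m : ℝ → A) :
    timeOrderedPropagator σ₁p σ₁m t * timeOrderedPropagator σ₂p σ₂m (-t)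
      + timeOrderedPropagator τ₁p τ₁m t * timeOrderedPropagator τ₂p τ₂m (-t)
      - timeOrderedPropagator σ₁p τ₁m t * timeOrderedPropagator τ₂p σ₂m (-t)
      - timeOrderedPropagator τ₁p σ₁m t * timeOrderedPropagator σ₂p τ₂m (-t) = 0 := by
  rcases ht.lt_or_gt with hneg | hpos
  · rw [timeOrderedPropagator_mul_neg_congr_of_neg hneg σ₁p τ₁p σ₁m σ₂p σ₂m τ₂m,
      timeOrderedPropagator_mul_neg_congr_of_neg hneg τ₁p σ₁p τ₁m τ₂p τ₂m σ₂m]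
    abel
  · rw [timeOrderedPropagator_mul_neg_congr_of_pos hpos σ₁p σ₁m τ₁m σ₂p τ₂p σ₂m,
      timeOrderedPropagator_mul_neg_congr_of_pos hpos τ₁p τ₁m σ₁m τ₂p σ₂p τ₂m]
    abel

end TimeOrderedPropagator

/-- The amplitude `s ↦ exp (i s ζ)` contributed by a pole at the complex energy `ζ`. -/
noncomputable def energyPhase (ζ : ℂ) (s : ℝ) : ℂ :=
  exp (I * s * ζ)

theorem bubble_largest_time_equation
    (ζ₁p ζ₁m ξ₁p ξ₁m ζ₂p ζ₂m ξ₂p ξ₂m : ℂ) (t : ℝ) (ht : t ≠ 0)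
    (zt₁ zt₂ wt₁ wt₂ ut₁ ut₂ vt₁ vt₂ : ℝ → ℂ)
    (hzt₁ : ∀ s, zt₁ s = Complex.I * (heaviside s : ℂ) * Complex.exp (Complex.I * s * ζ₁p)
        - Complex.I * (heaviside (-s) : ℂ) * Complex.exp (Complex.I * s * ζ₁m))
    (hzt₂ : ∀ s, zt₂ s = Complex.I * (heaviside s : ℂ) * Complex.exp (Complex.I * s * ζ₂p)
        - Complex.I * (heaviside (-s) : ℂ) * Complex.exp (Complex.I * s * ζ₂m))
    (hwt₁ : ∀ s, wt₁ s = Complex.I * (heaviside s : ℂ) * Complex.exp (Complex.I * s * ξ₁p)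
        - Complex.I * (heaviside (-s) : ℂ) * Complex.exp (Complex.I * s * ξ₁m))
    (hwt₂ : ∀ s, wt₂ s = Complex.I * (heaviside s : ℂ) * Complex.exp (Complex.I * s * ξ₂p)
        - Complex.I * (heaviside (-s) : ℂ) * Complex.exp (Complex.I * s * ξ₂m))
    (hut₁ : ∀ s, ut₁ s = Complex.I * (heaviside s : ℂ) * Complex.exp (Complex.I * s * ζ₁p)
        - Complex.I * (heaviside (-s) : ℂ) * Complex.exp (Complex.I * s * ξ₁m))
    (hut₂ : ∀ s, ut₂ s = Complex.I * (heaviside s : ℂ) * Complex.exp (Complex.I * s * ζ₂p)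
        - Complex.I * (heaviside (-s) : ℂ) * Complex.exp (Complex.I * s * ξ₂m))
    (hvt₁ : ∀ s, vt₁ s = Complex.I * (heaviside s : ℂ) * Complex.exp (Complex.I * s * ξ₁p)
        - Complex.I * (heaviside (-s) : ℂ) * Complex.exp (Complex.I * s * ζ₁m))
    (hvt₂ : ∀ s, vt₂ s = Complex.I * (heaviside s : ℂ) * Complex.exp (Complex.I * s * ξ₂p)
        - Complex.I * (heaviside (-s) : ℂ) * Complex.exp (Complex.I * s * ζ₂m)) :
    zt₁ t * zt₂ (-t) + wt₁ t * wt₂ (-t) - ut₁ t * vt₂ (-t) - vt₁ t * ut₂ (-t) = 0 := by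
  simpa only [hzt₁, hzt₂, hwt₁, hwt₂, hut₁, hut₂, hvt₁, hvt₂, timeOrderedPropagator, energyPhase,
    smul_eq_mul] using
    bubble_largest_time_equation_general ht (energyPhase ζ₁p) (energyPhase ζ₁m) (energyPhase ξ₁p)
      (energyPhase ξ₁m) (energyPhase ζ₂p) (energyPhase ζ₂m) (energyPhase ξ₂p) (energyPhase ξ₂m)
end
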